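/- arXiv:2311.09203 — 3 statements merged into one kernel-verified Lean document; each statement's English description precedes it below -/
import Mathlib

section
/- Let γ>0 and let p,q≥0 be integers with γ+2−q>0. Define h_{γ,p,q}(τ,σ) := ∂^{p+q}/∂τ^p∂σ^q [∑_{k≥1} k^γ·log(1+e^{σ−kτ})]. Then for every fixed ρ∈ℝ, as r→0⁺ one has h_{γ,p,q}(r,ρ) = (−1)^{p+1}·Li_{γ+2−q}(−e^ρ)·Γ(γ+p+1)·r^{−(γ+p+1)} + O(r^{−1/2}). -/
open Real Filter Asymptotics

/-- `h_{γ,p,q}(τ,σ) = ∂^{p+q}/∂τ^p∂σ^q [∑_{k≥1} k^γ log(1+e^{σ−kτ})]` -/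
noncomputable def hfun (γ : ℝ) (p q : ℕ) (τ σ : ℝ) : ℝ :=
  iteratedDeriv p (fun τ' : ℝ => iteratedDeriv q
    (fun σ' : ℝ => ∑' k : ℕ, (k : ℝ) ^ γ * Real.log (1 + Real.exp (σ' - k * τ'))) σ) τ

/-- `Li_ν(−x)` for `ν > 0`, `x > 0`, via the Fermi–Dirac integral
`Li_ν(−x) = −(1/Γ(ν)) ∫₀^∞ t^{ν−1}/(e^t/x + 1) dt`. -/
noncomputable def negLi (ν x : ℝ) : ℝ :=
  -(1 / Real.Gamma ν) * ∫ t in Set.Ioi (0:ℝ), t ^ (ν - 1) / (Real.exp t / x + 1)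

/-!
Termwise differentiation gives
`h(r, ρ) = (-1)^p ∑ k^(γ+p) g(r k)` with `g x = D^(p+q) [log (1 + exp)] (ρ - x)`, and `g` is smooth
with rapidly decaying derivatives at `+∞`. Poisson summation applied to the function
`x^(γ+p) g x` on the half-line turns this sum into `r^(-(γ+p+1)) ∑ φ(n / r)`, where `φ` is the
Fourier transform. The frequency `n = 0` is the Mellin transform of `g` at `γ+p+1`; integration by
parts reduces it to that of the first derivative of `log (1 + exp)`, which is a Fermi–Dirac
integral. At the other frequencies the singularity of `x^(γ+p)` at `0` limits the decay: repeated
integration by parts, and interpolation for the last fractional order, give `φ w = O(|w|^(-b))` for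
every `b < γ+p+1`. Hence they contribute `O(r^(b-(γ+p+1)))`, which is `O(r^(-ε))` for every `ε > 0`.
-/

section

open Set MeasureTheory Topology
open scoped FourierTransform ContDiff

variable {E : Type*} [NormedAddCommGroup E]

/-- Decay at `+∞` faster than every power, as needed for convergence of Mellin integrals at `+∞`.
Nothing is required at `-∞`. -/
def RapidDecay (f : ℝ → E) : Prop :=
  ∀ a : ℝ, f =O[atTop] fun x => x ^ (-a)

/-- One-sided Schwartz functions: smooth functions on the line all of whose derivatives decay
rapidly at `+∞`. Nothing is required at `-∞`, and smoothness across `0` bounds all derivatives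
near `0`. -/
structure IsSchwartzAtTop [NormedSpace ℝ E] (g : ℝ → E) : Prop where
  contDiff : ContDiff ℝ ∞ g
  rapidDecay_iteratedDeriv : ∀ n, RapidDecay (iteratedDeriv n g)

theorem isBigO_one_nhdsGT_of_continuous {f : ℝ → E} (hf : Continuous f) (a : ℝ) :
    f =O[𝓝[>] a] fun _ => (1 : ℝ) :=
  ((hf.tendsto a).mono_left nhdsWithin_le_nhds).isBigO_one ℝ

theorem isBigO_cpow_rpow_re (s : ℂ) {l : Filter ℝ} (hl : ∀ᶠ x in l, 0 < x) :
    (fun x : ℝ => (x : ℂ) ^ s) =O[l] fun x => x ^ s.re :=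
  .of_norm_eventuallyLE <| hl.mono fun _ hx => (Complex.norm_cpow_eq_rpow_re_of_pos hx s).le

namespace RapidDecay

variable {f : ℝ → E}

theorem mellinConvergent [NormedSpace ℂ E] (hf : RapidDecay f) (hc : Continuous f) {s : ℂ}
    {b : ℝ} (hf₀ : f =O[𝓝[>] 0] fun x => x ^ (-b)) (hb : b < s.re) : MellinConvergent f s :=
  mellinConvergent_of_isBigO_rpow (hc.locallyIntegrable.locallyIntegrableOn _)
    (hf (s.re + 1)) (lt_add_one _) hf₀ hb

theorem mellinConvergent_of_re_pos [NormedSpace ℂ E] (hf : RapidDecay f) (hc : Continuous f)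
    {s : ℂ} (hs : 0 < s.re) : MellinConvergent f s :=
  hf.mellinConvergent hc (b := 0) (by simpa using isBigO_one_nhdsGT_of_continuous hc 0) hs

theorem add {g : ℝ → E} (hf : RapidDecay f) (hg : RapidDecay g) :
    RapidDecay fun x => f x + g x :=
  fun a => (hf a).add (hg a)

theorem mul_of_norm_le {f φ : ℝ → ℂ} (hf : RapidDecay f) {C : ℝ} (hφ : ∀ x, ‖φ x‖ ≤ C) :
    RapidDecay fun x => f x * φ x := fun a => by
  have hφ : φ =O[atTop] fun _ => (1 : ℝ) := .of_bound C (.of_forall fun x => by simpa using hφ x)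
  simpa using (hf a).mul hφ

theorem tendsto_cpow_mul {f : ℝ → ℂ} (hf : RapidDecay f) (s : ℂ) :
    Tendsto (fun x : ℝ => (x : ℂ) ^ s * f x) atTop (𝓝 0) := by
  refine IsBigO.trans_tendsto ?_ (tendsto_rpow_neg_atTop one_pos)
  refine ((isBigO_cpow_rpow_re s (eventually_gt_atTop 0)).mul (hf (s.re + 1))).congr' .rfl ?_
  filter_upwards [eventually_gt_atTop 0] with x hx
  rw [← rpow_add hx]
  ring_nf

end RapidDecay

theorem tendsto_cpow_mul_nhdsGT_zero {f : ℝ → ℂ} {s : ℂ} {b : ℝ}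
    (hf : f =O[𝓝[>] 0] fun x => x ^ (-b)) (hb : b < s.re) :
    Tendsto (fun x : ℝ => (x : ℂ) ^ s * f x) (𝓝[>] 0) (𝓝 0) := by
  have hpow : Tendsto (fun x : ℝ => x ^ (s.re - b)) (𝓝[>] 0) (𝓝 0) := by
    have := (continuousAt_rpow_const 0 (s.re - b) (.inr (by linarith))).tendsto
    rw [zero_rpow (by linarith)] at this
    exact this.mono_left nhdsWithin_le_nhds
  refine IsBigO.trans_tendsto ?_ hpow
  refine ((isBigO_cpow_rpow_re s self_mem_nhdsWithin).mul hf).congr' .rfl ?_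
  filter_upwards [self_mem_nhdsWithin] with x hx
  rw [← rpow_add hx, sub_eq_add_neg]

namespace IsSchwartzAtTop

variable [NormedSpace ℝ E] {g : ℝ → E}

theorem continuous (hg : IsSchwartzAtTop g) : Continuous g :=
  hg.contDiff.continuous

theorem rapidDecay (hg : IsSchwartzAtTop g) : RapidDecay g := by
  simpa using hg.rapidDecay_iteratedDeriv 0

theorem hasDerivAt (hg : IsSchwartzAtTop g) (x : ℝ) : HasDerivAt g (deriv g x) x :=
  (hg.contDiff.differentiable (by simp) x).hasDerivAt

theorem deriv (hg : IsSchwartzAtTop g) : IsSchwartzAtTop (deriv g) where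
  contDiff := (contDiff_infty_iff_deriv.1 hg.contDiff).2
  rapidDecay_iteratedDeriv n := by
    simpa only [← iteratedDeriv_succ'] using hg.rapidDecay_iteratedDeriv (n + 1)

theorem ofReal {g : ℝ → ℝ} (hg : IsSchwartzAtTop g) : IsSchwartzAtTop fun x => (g x : ℂ) where
  contDiff := Complex.ofRealCLM.contDiff.comp hg.contDiff
  rapidDecay_iteratedDeriv n := by
    induction n generalizing g with
    | zero => exact fun a => by simpa using Complex.isBigO_ofReal_left.2 (hg.rapidDecay a)
    | succ n ih =>
      have hderiv : _root_.deriv (fun x => (g x : ℂ)) = fun x => ((_root_.deriv g x : ℝ) : ℂ) :=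
        funext fun x => (hg.hasDerivAt x).ofReal_comp.deriv
      rw [iteratedDeriv_succ', hderiv]
      exact ih hg.deriv

end IsSchwartzAtTop

theorem hasDerivAt_ofReal_cpow {x : ℝ} (hx : 0 < x) (s : ℂ) :
    HasDerivAt (fun x : ℝ => (x : ℂ) ^ s) (s * (x : ℂ) ^ (s - 1)) x := by
  simpa using ((hasDerivAt_id (x : ℂ)).cpow_const (c := s) (by simp [hx])).comp_ofReal

theorem mellin_deriv_add_one {f f' : ℝ → ℂ} (hf : ∀ x, HasDerivAt f (f' x) x)
    (hf' : Continuous f') (hfd : RapidDecay f) (hfd' : RapidDecay f') {s : ℂ} (hs : -1 < s.re)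
    {b : ℝ} (hf₀ : f =O[𝓝[>] 0] fun x => x ^ (-b)) (hb : b < s.re) :
    mellin f' (s + 1) = -(s * mellin f s) := by
  have hc : Continuous f := continuous_iff_continuousAt.2 fun x => (hf x).continuousAt
  have hint : MellinConvergent f s := hfd.mellinConvergent hc hf₀ hb
  have hint' : MellinConvergent f' (s + 1) :=
    hfd'.mellinConvergent_of_re_pos hf' (by simpa using by linarith)
  have hparts := integral_Ioi_mul_deriv_eq_deriv_mul (fun x hx => hasDerivAt_ofReal_cpow hx s)
    (fun x _ => hf x) (by simpa [MellinConvergent, Pi.mul_def] using hint')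
    (by simpa [MellinConvergent, Pi.mul_def, mul_assoc, mul_left_comm] using hint.const_smul s)
    (tendsto_cpow_mul_nhdsGT_zero hf₀ hb) (hfd.tendsto_cpow_mul s)
  simpa [mellin, mul_assoc, integral_const_mul] using hparts

/-! ### Decay of the Fourier transform of `x ^ (s - 1) * g x` on the half-line -/

theorem norm_fourierChar_sub_one_le_rpow (t : ℝ) {θ : ℝ} (hθ₀ : 0 ≤ θ) (hθ₁ : θ ≤ 1) :
    ‖(𝐞 t : ℂ) - 1‖ ≤ 2 * |2 * π * t| ^ θ := by
  rw [fourierChar_apply]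
  set u := 2 * π * t
  rw [mul_comm]
  rcases le_total |u| 1 with hu | hu
  · calc ‖Complex.exp (Complex.I * u) - 1‖ ≤ |u| ^ (1 : ℝ) := by
          simpa using norm_exp_I_mul_ofReal_sub_one_le (x := u)
      _ ≤ |u| ^ θ := rpow_le_rpow_of_exponent_ge' (abs_nonneg u) hu hθ₀ hθ₁
      _ ≤ 2 * |u| ^ θ := by linarith [rpow_nonneg (abs_nonneg u) θ]
  · calc ‖Complex.exp (Complex.I * u) - 1‖ ≤ ‖Complex.exp (Complex.I * u)‖ + ‖(1 : ℂ)‖ :=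
          norm_sub_le _ _
      _ = 2 := by rw [Complex.norm_exp_I_mul_ofReal, norm_one]; norm_num
      _ ≤ 2 * |u| ^ θ := by linarith [one_le_rpow hu hθ₀]

theorem hasDerivAt_fourierChar_neg_mul (w x : ℝ) :
    HasDerivAt (fun x : ℝ => (𝐞 (-(x * w)) : ℂ)) (-(2 * π * Complex.I * w) * 𝐞 (-(x * w))) x := by
  refine ((hasDerivAt_fourierChar (-(x * w))).scomp x
    ((hasDerivAt_id x).mul_const w).neg).congr_deriv ?_
  rw [Complex.real_smul]
  push_cast
  ring

theorem continuous_fourierChar_neg_mul (w : ℝ) : Continuous fun x : ℝ => (𝐞 (-(x * w)) : ℂ) :=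
  continuous_iff_continuousAt.2 fun x => (hasDerivAt_fourierChar_neg_mul w x).continuousAt

theorem mellin_mul_fourierChar_sub_one_isBigO {f : ℝ → ℂ} (hf : RapidDecay f) (hc : Continuous f)
    {s : ℂ} {θ : ℝ} (hθ₀ : 0 ≤ θ) (hθ₁ : θ ≤ 1) (hs : 0 < s.re + θ) (l : Filter ℝ) :
    (fun w : ℝ => mellin (fun x => f x * (𝐞 (-(x * w)) - 1)) s) =O[l] fun w => |w| ^ θ := by
  have hint : IntegrableOn (fun x : ℝ => ‖(x : ℂ) ^ (s + θ - 1) • f x‖) (Ioi 0) :=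
    (hf.mellinConvergent_of_re_pos hc (s := s + θ) (by simpa using hs)).norm
  refine .of_bound (2 * (2 * π) ^ θ * ∫ x in Ioi (0 : ℝ), ‖(x : ℂ) ^ (s + θ - 1) • f x‖)
    (.of_forall fun w => ?_)
  rw [norm_of_nonneg (rpow_nonneg (abs_nonneg w) θ), mul_right_comm, ← integral_const_mul]
  refine norm_integral_le_of_norm_le (hint.const_mul _) ?_
  filter_upwards [ae_restrict_mem measurableSet_Ioi] with x (hx : 0 < x)
  have habs : |2 * π * -(x * w)| ^ θ = (2 * π) ^ θ * (x ^ θ * |w| ^ θ) := by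
    rw [abs_mul (2 * π), abs_neg, abs_mul x, abs_of_pos two_pi_pos, abs_of_pos hx,
      mul_rpow two_pi_pos.le (by positivity), mul_rpow hx.le (abs_nonneg w)]
  have hpow : ‖(x : ℂ) ^ (s + θ - 1)‖ = ‖(x : ℂ) ^ (s - 1)‖ * x ^ θ := by
    simp only [Complex.norm_cpow_eq_rpow_re_of_pos hx, ← rpow_add hx, Complex.sub_re,
      Complex.add_re, Complex.ofReal_re, Complex.one_re]
    ring_nf
  calc ‖(x : ℂ) ^ (s - 1) • (f x * (𝐞 (-(x * w)) - 1))‖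
      ≤ ‖(x : ℂ) ^ (s - 1)‖ * (‖f x‖ * (2 * |2 * π * -(x * w)| ^ θ)) := by
        rw [norm_smul, norm_mul]
        gcongr
        exact norm_fourierChar_sub_one_le_rpow _ hθ₀ hθ₁
    _ = 2 * (2 * π) ^ θ * |w| ^ θ * ‖(x : ℂ) ^ (s + θ - 1) • f x‖ := by
        rw [habs, norm_smul, hpow]
        ring

theorem norm_fourierChar_sub_le (t : ℝ) (c : ℂ) : ‖(𝐞 t : ℂ) - c‖ ≤ 1 + ‖c‖ := by
  simpa only [Circle.norm_coe] using norm_sub_le (𝐞 t : ℂ) c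

/-- Integration by parts. Taking `c = 1` makes the boundary term at `0` vanish also for
`-1 < re s ≤ 0`; this gives the last fractional order of decay in `w`. -/
theorem mul_mellin_mul_fourierChar {g : ℝ → ℂ} (hg : IsSchwartzAtTop g) {s c : ℂ} {b w : ℝ}
    (hs : -1 < s.re) (hg₀ : (fun x => g x * (𝐞 (-(x * w)) - c)) =O[𝓝[>] 0] fun x => x ^ (-b))
    (hb : b < s.re) :
    2 * π * Complex.I * w * mellin (fun x => g x * 𝐞 (-(x * w))) (s + 1) =
      s * mellin (fun x => g x * (𝐞 (-(x * w)) - c)) s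
        + mellin (fun x => deriv g x * (𝐞 (-(x * w)) - c)) (s + 1) := by
  have hchar := continuous_fourierChar_neg_mul w
  have hs' : 0 < (s + 1).re := by simpa using by linarith
  have hd : RapidDecay fun x => deriv g x * ((𝐞 (-(x * w)) : ℂ) - c) :=
    hg.deriv.rapidDecay.mul_of_norm_le fun x => norm_fourierChar_sub_le _ c
  have hdc : Continuous fun x => deriv g x * ((𝐞 (-(x * w)) : ℂ) - c) :=
    hg.deriv.continuous.mul (hchar.sub continuous_const)
  have he : RapidDecay fun x => g x * (-(2 * π * Complex.I * w) * (𝐞 (-(x * w)) : ℂ)) :=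
    hg.rapidDecay.mul_of_norm_le (C := 2 * π * |w|) fun x => by
      simp [abs_of_pos pi_pos, Circle.norm_coe]
  have hec : Continuous fun x => g x * (-(2 * π * Complex.I * w) * (𝐞 (-(x * w)) : ℂ)) :=
    hg.continuous.mul (continuous_const.mul hchar)
  have hparts := mellin_deriv_add_one
    (fun x => (hg.hasDerivAt x).mul ((hasDerivAt_fourierChar_neg_mul w x).sub_const c))
    (hdc.add hec) (hg.rapidDecay.mul_of_norm_le fun x => norm_fourierChar_sub_le _ c)
    (hd.add he) hs hg₀ hb
  have hsplit := (hasMellin_add (hd.mellinConvergent_of_re_pos hdc hs')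
    (he.mellinConvergent_of_re_pos hec hs')).2
  have hconst := mellin_const_smul (fun x => g x * (𝐞 (-(x * w)) : ℂ)) (s + 1)
    (-(2 * π * Complex.I * w))
  simp only [smul_eq_mul, mul_left_comm _ (g _)] at hconst
  rw [hsplit, hconst] at hparts
  linear_combination -hparts

theorem mellin_mul_fourierChar_isBigO_of_sub {g : ℝ → ℂ} (hg : IsSchwartzAtTop g) {s c : ℂ}
    {a b : ℝ} (hs : 0 < s.re)
    (hg₀ : ∀ w, (fun x => g x * (𝐞 (-(x * w)) - c)) =O[𝓝[>] 0] fun x => x ^ (-a))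
    (ha : a < s.re - 1)
    (hG : (fun w : ℝ => mellin (fun x => g x * (𝐞 (-(x * w)) - c)) (s - 1))
      =O[cocompact ℝ] fun w => |w| ^ (1 - b))
    (hG' : (fun w : ℝ => mellin (fun x => deriv g x * (𝐞 (-(x * w)) - c)) s)
      =O[cocompact ℝ] fun w => |w| ^ (1 - b)) :
    (fun w : ℝ => mellin (fun x => g x * 𝐞 (-(x * w))) s) =O[cocompact ℝ] fun w => |w| ^ (-b) := by
  have hinv : (fun w : ℝ => (2 * π * Complex.I * w)⁻¹) =O[cocompact ℝ] fun w => |w|⁻¹ :=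
    .of_bound (2 * π)⁻¹ (.of_forall fun w => by simp [abs_of_pos pi_pos, mul_comm])
  refine (hinv.mul ((hG.const_mul_left (s - 1)).add hG')).congr' ?_ ?_
  · filter_upwards [isCompact_singleton.compl_mem_cocompact] with w (hw : w ≠ 0)
    have hparts := mul_mellin_mul_fourierChar hg (s := s - 1) (by simpa using hs) (hg₀ w)
      (by simpa using ha)
    rw [sub_add_cancel] at hparts
    rw [← hparts, inv_mul_cancel_left₀ (by simp [hw])]
  · filter_upwards [isCompact_singleton.compl_mem_cocompact] with w (hw : w ≠ 0)
    rw [← rpow_neg_one, ← rpow_add (abs_pos.2 hw)]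
    ring_nf

theorem mul_fourierChar_sub_one_isBigO_nhdsGT {g : ℝ → ℂ} (hg : Continuous g) (w : ℝ) :
    (fun x => g x * ((𝐞 (-(x * w)) : ℂ) - 1)) =O[𝓝[>] 0] fun x => x ^ (-(-1 : ℝ)) := by
  have hchar : (fun x : ℝ => (𝐞 (-(x * w)) : ℂ) - 1) =O[𝓝[>] 0] fun x => x := by
    simpa using (hasDerivAt_fourierChar_neg_mul w 0).isBigO_sub.mono nhdsWithin_le_nhds
  simpa using (isBigO_one_nhdsGT_of_continuous hg 0).mul hchar

theorem mellin_mul_fourierChar_isBigO_of_le_one {g : ℝ → ℂ} (hg : IsSchwartzAtTop g) {s : ℂ}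
    {b : ℝ} (hb₀ : 0 ≤ b) (hb₁ : b ≤ 1) (hb : b < s.re) :
    (fun w : ℝ => mellin (fun x => g x * 𝐞 (-(x * w))) s) =O[cocompact ℝ] fun w => |w| ^ (-b) :=
  mellin_mul_fourierChar_isBigO_of_sub hg (by linarith)
    (mul_fourierChar_sub_one_isBigO_nhdsGT hg.continuous) (by linarith)
    (mellin_mul_fourierChar_sub_one_isBigO hg.rapidDecay hg.continuous (by linarith)
      (by linarith) (by simpa using by linarith) _)
    (mellin_mul_fourierChar_sub_one_isBigO hg.deriv.rapidDecay hg.deriv.continuous (by linarith)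
      (by linarith) (by linarith) _)

theorem mellin_mul_fourierChar_isBigO {g : ℝ → ℂ} (hg : IsSchwartzAtTop g) {s : ℂ} {b : ℝ}
    (hb₀ : 0 ≤ b) (hb : b < s.re) :
    (fun w : ℝ => mellin (fun x => g x * 𝐞 (-(x * w))) s) =O[cocompact ℝ] fun w => |w| ^ (-b) := by
  obtain ⟨n, hn⟩ := exists_nat_ge b
  induction n generalizing g s b with
  | zero => exact mellin_mul_fourierChar_isBigO_of_le_one hg hb₀ (hn.trans (by simp)) hb
  | succ n ih =>
    rcases le_total b 1 with hb₁ | hb₁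
    · exact mellin_mul_fourierChar_isBigO_of_le_one hg hb₀ hb₁ hb
    have hn' : b - 1 ≤ n := by push_cast at hn; linarith
    have hg₀ (w : ℝ) :
        (fun x => g x * ((𝐞 (-(x * w)) : ℂ) - 0)) =O[𝓝[>] 0] fun x => x ^ (-0 : ℝ) := by
      simpa using isBigO_one_nhdsGT_of_continuous
        (hg.continuous.mul (continuous_fourierChar_neg_mul w)) 0
    refine mellin_mul_fourierChar_isBigO_of_sub hg (by linarith) hg₀ (by linarith) ?_ ?_
    · simpa using ih hg (s := s - 1) (sub_nonneg.2 hb₁) (by simpa using hb) hn'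
    · simpa using ih hg.deriv (s := s) (sub_nonneg.2 hb₁) (by linarith) hn'

/-! ### Poisson summation -/

theorem fourier_comp_mul_left [NormedSpace ℂ E] (f : ℝ → E) {r : ℝ} (hr : r ≠ 0) (w : ℝ) :
    𝓕 (fun x => f (r * x)) w = |r⁻¹| • 𝓕 f (w / r) := by
  simp_rw [fourier_real_eq, ← Measure.integral_comp_mul_left]
  congr! 5
  field_simp

theorem isBigO_rpow_cocompact_comp_mul_left {f : ℝ → E} {b r : ℝ}
    (hf : f =O[cocompact ℝ] (|·| ^ (-b))) (hr : r ≠ 0) :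
    (fun x => f (r * x)) =O[cocompact ℝ] (|·| ^ (-b)) := by
  refine (hf.comp_tendsto (Homeomorph.mulLeft₀ r hr).isClosedEmbedding.tendsto_cocompact).trans
    (.of_bound (|r| ^ (-b)) (.of_forall fun x => ?_))
  simp [abs_mul, mul_rpow, abs_rpow_of_nonneg]

theorem mul_tsum_comp_mul_eq_tsum_fourier {f : ℝ → ℂ} (hc : Continuous f) {b : ℝ} (hb : 1 < b)
    (hf : f =O[cocompact ℝ] (|·| ^ (-b))) (hFf : 𝓕 f =O[cocompact ℝ] (|·| ^ (-b))) {r : ℝ}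
    (hr : 0 < r) : r * ∑' n : ℤ, f (r * n) = ∑' n : ℤ, 𝓕 f (n / r) := by
  have hscale : 𝓕 (fun x => f (r * x)) = |r⁻¹| • fun w => 𝓕 f (r⁻¹ * w) :=
    funext fun w => by rw [fourier_comp_mul_left f hr.ne', div_eq_inv_mul, Pi.smul_apply]
  have hpoisson := tsum_eq_tsum_fourier_of_rpow_decay (f := fun x => f (r * x))
    (hc.comp (continuous_const_mul r)) hb (isBigO_rpow_cocompact_comp_mul_left hf hr.ne')
    (hscale ▸ (isBigO_rpow_cocompact_comp_mul_left hFf (inv_ne_zero hr.ne')).const_smul_left _) 0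
  rw [hscale] at hpoisson
  simp only [zero_add, Pi.smul_apply, QuotientAddGroup.mk_zero,
    fourier_eval_zero, mul_one, tsum_const_smul''] at hpoisson
  rw [hpoisson, abs_of_pos (inv_pos.2 hr), Complex.real_smul, Complex.ofReal_inv,
    mul_inv_cancel_left₀ (by simpa using hr.ne')]
  simp only [div_eq_inv_mul]

theorem tsum_int_comp_div_sub_isBigO [CompleteSpace E] {F : ℝ → E} {b : ℝ} (hb : 1 < b)
    (hF : F =O[cocompact ℝ] (|·| ^ (-b))) :
    (fun r : ℝ => ∑' n : ℤ, F (n / r) - F 0) =O[𝓝[>] 0] fun r => r ^ b := by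
  obtain ⟨C, hC⟩ := hF.bound
  rw [← Metric.cobounded_eq_cocompact, ← comap_norm_atTop, eventually_comap] at hC
  obtain ⟨R, hR⟩ := eventually_atTop.1 hC
  refine .of_bound (C * ∑' n : ℤ, |(n : ℝ)| ^ (-b)) ?_
  filter_upwards [self_mem_nhdsWithin, tendsto_inv_nhdsGT_zero.eventually_ge_atTop R]
    with r (hr : 0 < r) hrR
  have hterm (n : ℤ) (hn : n ≠ 0) : ‖F (n / r)‖ ≤ C * r ^ b * |(n : ℝ)| ^ (-b) := by
    have hle : R ≤ ‖(n : ℝ) / r‖ := by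
      have : (1 : ℝ) ≤ |(n : ℝ)| := by exact_mod_cast Int.one_le_abs hn
      rw [norm_eq_abs, abs_div, abs_of_pos hr, div_eq_mul_inv]
      exact hrR.trans (le_mul_of_one_le_left (inv_pos.2 hr).le this)
    refine (hR _ hle _ rfl).trans_eq ?_
    rw [norm_of_nonneg (by positivity), abs_div, abs_of_pos hr, div_rpow (abs_nonneg _) hr.le,
      rpow_neg hr.le, div_inv_eq_mul]
    ring
  have hmajorant := (summable_abs_int_rpow hb).mul_left (C * r ^ b)
  have hsum : Summable fun n : ℤ => F (n / r) := .of_norm_bounded_eventually hmajorant <| by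
    filter_upwards [(finite_singleton (0 : ℤ)).compl_mem_cofinite] with n hn using hterm n hn
  have htail : ‖∑' n : ℤ, if n = 0 then 0 else F (n / r)‖
      ≤ ∑' n : ℤ, C * r ^ b * |(n : ℝ)| ^ (-b) := by
    refine tsum_of_norm_bounded hmajorant.hasSum fun n => ?_
    split_ifs with hn
    · simp [hn, zero_rpow (by linarith : -b ≠ 0)]
    · exact hterm n hn
  rw [hsum.tsum_eq_add_tsum_ite 0]
  simpa [tsum_mul_left, abs_of_pos (rpow_pos_of_pos hr b), mul_right_comm] using htail

theorem riemannSum_sub_integral_isBigO {f : ℝ → ℂ} (hc : Continuous f) {b : ℝ} (hb : 1 < b)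
    (hf : f =O[cocompact ℝ] (|·| ^ (-b))) (hFf : 𝓕 f =O[cocompact ℝ] (|·| ^ (-b))) :
    (fun r : ℝ => r * ∑' n : ℤ, f (r * n) - ∫ x, f x) =O[𝓝[>] 0] fun r => r ^ b := by
  refine (tsum_int_comp_div_sub_isBigO hb hFf).congr' ?_ .rfl
  filter_upwards [self_mem_nhdsWithin] with r hr
  rw [mul_tsum_comp_mul_eq_tsum_fourier hc hb hf hFf hr, fourier_real_eq (w := 0)]
  simp

/-- The integrand `x ^ (s - 1) * g x` of the Mellin transform of `g` at `s`, extended by zero to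
the whole line so that its Fourier transform and Poisson summation make sense. -/
noncomputable def mellinIntegrand (g : ℝ → ℂ) (s : ℂ) : ℝ → ℂ :=
  (Ioi 0).indicator fun x => (x : ℂ) ^ (s - 1) * g x

theorem fourier_mellinIntegrand (g : ℝ → ℂ) (s : ℂ) (w : ℝ) :
    𝓕 (mellinIntegrand g s) w = mellin (fun x => g x * 𝐞 (-(x * w))) s := by
  rw [fourier_real_eq, mellin, ← integral_indicator measurableSet_Ioi]
  congr! with x
  by_cases hx : x ∈ Ioi 0
  · rw [mellinIntegrand, indicator_of_mem hx, indicator_of_mem hx, Circle.smul_def, smul_eq_mul,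
      smul_eq_mul]
    ring
  · simp [mellinIntegrand, hx]

theorem continuous_mellinIntegrand {g : ℝ → ℂ} (hg : Continuous g) {s : ℂ} (hs : 1 < s.re) :
    Continuous (mellinIntegrand g s) := by
  refine ((Complex.continuous_ofReal_cpow_const (by simpa using hs)).mul hg).indicator
    fun x hx => ?_
  have hs' : s - 1 ≠ 0 := fun h => by simp [sub_eq_zero.1 h] at hs
  simp_all

theorem RapidDecay.mellinIntegrand_isBigO {g : ℝ → ℂ} (hg : RapidDecay g) (s : ℂ) (b : ℝ) :
    mellinIntegrand g s =O[cocompact ℝ] (|·| ^ (-b)) := by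
  rw [cocompact_eq_atBot_atTop, isBigO_sup]
  constructor
  · refine (isBigO_zero _ _).congr' ?_ .rfl
    filter_upwards [eventually_le_atBot 0] with x hx
    simp [mellinIntegrand, hx]
  · refine ((isBigO_cpow_rpow_re (s - 1) (eventually_gt_atTop 0)).mul
      (hg ((s - 1).re + b))).congr' ?_ ?_ <;>
    filter_upwards [eventually_gt_atTop 0] with x hx
    · simp [mellinIntegrand, hx]
    · rw [← rpow_add hx, abs_of_pos hx]
      ring_nf

theorem tsum_int_mellinIntegrand (g : ℝ → ℂ) {s : ℂ} (hs : s ≠ 1) {r : ℝ} (hr : 0 < r) :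
    ∑' n : ℤ, mellinIntegrand g s (r * n) =
      (r : ℂ) ^ (s - 1) * ∑' k : ℕ, (k : ℂ) ^ (s - 1) * g (r * k) := by
  have hsupp : Function.support (fun n : ℤ => mellinIntegrand g s (r * n)) ⊆
      range ((↑) : ℕ → ℤ) := fun n hn => by
    have hpos : 0 < r * n := by
      contrapose! hn
      simp [mellinIntegrand, hn]
    exact ⟨n.toNat, Int.toNat_of_nonneg (by exact_mod_cast (pos_of_mul_pos_right hpos hr.le).le)⟩
  rw [← Nat.cast_injective.tsum_eq hsupp, ← tsum_mul_left]
  congr! with k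
  rcases k.eq_zero_or_pos with rfl | hk
  · simp [mellinIntegrand, Complex.zero_cpow (sub_ne_zero.2 hs)]
  · have hk' : 0 < r * k := by positivity
    have hpow := Complex.mul_cpow_ofReal_nonneg hr.le (Nat.cast_nonneg (α := ℝ) k) (s - 1)
    rw [Complex.ofReal_natCast] at hpow
    simp [mellinIntegrand, hk', hpow, mul_assoc]

theorem tsum_cpow_mul_sub_mellin_isBigO {g : ℝ → ℂ} (hg : IsSchwartzAtTop g) {s : ℂ}
    (hs : 1 < s.re) {ε : ℝ} (hε : 0 < ε) :
    (fun r : ℝ => ∑' k : ℕ, (k : ℂ) ^ (s - 1) * g (r * k) - (r : ℂ) ^ (-s) * mellin g s)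
      =O[𝓝[>] 0] fun r => r ^ (-ε) := by
  obtain ⟨b, hb, hbs⟩ : ∃ b, max 1 (s.re - ε) < b ∧ b < s.re := exists_between (by simp [hs, hε])
  obtain ⟨hb₁, hbε⟩ := max_lt_iff.1 hb
  have hsum := riemannSum_sub_integral_isBigO (continuous_mellinIntegrand hg.continuous hs) hb₁
    (hg.rapidDecay.mellinIntegrand_isBigO s b) (by
      simpa only [← fourier_mellinIntegrand] using
        mellin_mul_fourierChar_isBigO hg (by linarith) hbs)
  have hs₁ : s ≠ 1 := by rintro rfl; simp at hs
  have hmellin : ∫ x, mellinIntegrand g s x = mellin g s := integral_indicator measurableSet_Ioi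
  refine (((isBigO_cpow_rpow_re (-s) self_mem_nhdsWithin).mul hsum).congr' ?_ .rfl).trans ?_
  · filter_upwards [self_mem_nhdsWithin] with r (hr : 0 < r)
    have hr' : (r : ℂ) ≠ 0 := by exact_mod_cast hr.ne'
    have hpow : (r : ℂ) ^ (-s) * (r * (r : ℂ) ^ (s - 1)) = 1 := by
      rw [Complex.cpow_neg, Complex.cpow_sub _ _ hr', Complex.cpow_one,
        mul_div_cancel₀ _ hr', inv_mul_cancel₀ (by simp [Complex.cpow_eq_zero_iff, hr'])]
    rw [hmellin, tsum_int_mellinIntegrand g hs₁ hr]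
    linear_combination (∑' k : ℕ, (k : ℂ) ^ (s - 1) * g (r * k)) * hpow
  · refine .of_bound' ?_
    filter_upwards [Ioo_mem_nhdsGT one_pos] with r hr
    rw [Complex.neg_re, ← rpow_add hr.1, norm_of_nonneg (rpow_nonneg hr.1.le _),
      norm_of_nonneg (rpow_nonneg hr.1.le _)]
    exact rpow_le_rpow_of_exponent_ge hr.1 hr.2.le (by linarith)

theorem mellin_ofReal (g : ℝ → ℝ) (a : ℝ) :
    mellin (fun x => (g x : ℂ)) a = ((∫ x in Ioi (0 : ℝ), x ^ (a - 1) * g x : ℝ) : ℂ) := by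
  rw [mellin, ← integral_complex_ofReal]
  refine setIntegral_congr_fun measurableSet_Ioi fun x (hx : 0 < x) => ?_
  simp [Complex.ofReal_cpow hx.le]

theorem tsum_rpow_mul_sub_integral_isBigO {g : ℝ → ℝ} (hg : IsSchwartzAtTop g) {a : ℝ}
    (ha : 0 < a) {ε : ℝ} (hε : 0 < ε) :
    (fun r : ℝ => ∑' k : ℕ, (k : ℝ) ^ a * g (r * k)
        - r ^ (-(a + 1)) * ∫ x in Ioi (0 : ℝ), x ^ a * g x) =O[𝓝[>] 0] fun r => r ^ (-ε) := by
  have hsum := tsum_cpow_mul_sub_mellin_isBigO hg.ofReal (s := ((a + 1 : ℝ) : ℂ))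
    (by simpa using ha) hε
  refine Complex.isBigO_ofReal_left.1 (hsum.congr' ?_ .rfl)
  filter_upwards [self_mem_nhdsWithin] with r (hr : 0 < r)
  rw [mellin_ofReal, add_sub_cancel_right]
  push_cast [Complex.ofReal_cpow, hr.le]
  simp [Complex.ofReal_cpow]

theorem integral_rpow_mul_deriv {g : ℝ → ℝ} (hg : IsSchwartzAtTop g) {a : ℝ} (ha : 0 < a) :
    ∫ x in Ioi (0 : ℝ), x ^ a * deriv g x = -(a * ∫ x in Ioi (0 : ℝ), x ^ (a - 1) * g x) := by
  have hparts := mellin_deriv_add_one (fun x => (hg.hasDerivAt x).ofReal_comp)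
    hg.deriv.ofReal.continuous hg.ofReal.rapidDecay hg.deriv.ofReal.rapidDecay (s := a) (b := 0)
    (by simpa using by linarith)
    (by simpa using isBigO_one_nhdsGT_of_continuous hg.ofReal.continuous 0) (by simpa using ha)
  rw [← Complex.ofReal_one, ← Complex.ofReal_add, mellin_ofReal, mellin_ofReal,
    add_sub_cancel_right] at hparts
  exact_mod_cast hparts

/-- Smooth functions all of whose derivatives are bounded by a multiple of `exp`. Reflecting such
a function gives a one-sided Schwartz function, and series of its translates towards `-∞` can be
differentiated termwise. -/
structure HasExpBoundedDerivs (F : ℝ → ℝ) : Prop where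
  contDiff : ContDiff ℝ ∞ F
  exists_bound : ∀ n, ∃ C, ∀ u, |iteratedDeriv n F u| ≤ C * exp u

namespace HasExpBoundedDerivs

variable {F : ℝ → ℝ}

theorem deriv (hF : HasExpBoundedDerivs F) : HasExpBoundedDerivs (deriv F) where
  contDiff := (contDiff_infty_iff_deriv.1 hF.contDiff).2
  exists_bound n := by simpa only [← iteratedDeriv_succ'] using hF.exists_bound (n + 1)

theorem of_deriv (hF : Differentiable ℝ F) (hF' : HasExpBoundedDerivs (_root_.deriv F)) {C : ℝ}
    (hC : ∀ u, |F u| ≤ C * exp u) : HasExpBoundedDerivs F where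
  contDiff := contDiff_infty_iff_deriv.2 ⟨hF, hF'.contDiff⟩
  exists_bound
    | 0 => ⟨C, by simpa using hC⟩
    | n + 1 => by simpa only [iteratedDeriv_succ'] using hF'.exists_bound n

theorem iteratedDeriv (hF : HasExpBoundedDerivs F) (n : ℕ) :
    HasExpBoundedDerivs (iteratedDeriv n F) := by
  induction n with
  | zero => simpa using hF
  | succ n ih => simpa only [iteratedDeriv_succ] using ih.deriv

theorem isSchwartzAtTop_comp_const_sub (hF : HasExpBoundedDerivs F) (ρ : ℝ) :
    IsSchwartzAtTop fun x => F (ρ - x) where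
  contDiff := hF.contDiff.comp (contDiff_const.sub contDiff_id)
  rapidDecay_iteratedDeriv n a := by
    obtain ⟨C, hC⟩ := hF.exists_bound n
    have hexp : (fun x => exp (ρ - x)) =O[atTop] fun x => x ^ (-a) := by
      simpa [sub_eq_add_neg, exp_add] using
        ((isLittleO_exp_neg_mul_rpow_atTop one_pos (-a)).isBigO.const_mul_left (exp ρ))
    refine (IsBigO.of_bound C (.of_forall fun x => ?_)).trans hexp
    simpa [iteratedDeriv_comp_const_sub, abs_mul] using hC (ρ - x)

end HasExpBoundedDerivs

theorem integral_rpow_mul_iteratedDeriv_comp_const_sub {F : ℝ → ℝ}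
    (hF : HasExpBoundedDerivs F) (ρ : ℝ) {a : ℝ} (ha : -1 < a) (n : ℕ) :
    Gamma (a + 1) * ∫ x in Ioi (0 : ℝ), x ^ (a + n) * iteratedDeriv n F (ρ - x) =
      Gamma (a + n + 1) * ∫ x in Ioi (0 : ℝ), x ^ a * F (ρ - x) := by
  induction n with
  | zero => simp
  | succ n ih =>
    have hpos : 0 < a + (n + 1) := by linarith [n.cast_nonneg (α := ℝ)]
    have hparts := integral_rpow_mul_deriv
      ((hF.iteratedDeriv n).isSchwartzAtTop_comp_const_sub ρ) hpos
    simp only [deriv_comp_const_sub, ← iteratedDeriv_succ, mul_neg, integral_neg, neg_inj,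
      show a + (n + 1) - 1 = a + (n : ℝ) by ring] at hparts
    push_cast
    rw [hparts, Gamma_add_one hpos.ne', ← add_assoc a, mul_left_comm, ih]
    ring

/-! ### Termwise differentiation -/

theorem summable_rpow_mul_pow_mul_exp_neg_mul (a : ℝ) (m : ℕ) {τ : ℝ} (hτ : 0 < τ) :
    Summable fun k : ℕ => (k : ℝ) ^ a * k ^ m * exp (-(τ * k)) := by
  have hexp := (isLittleO_exp_neg_mul_rpow_atTop hτ (-2 - (a + m))).isBigO.comp_tendsto
    tendsto_natCast_atTop_atTop
  refine summable_of_isBigO_nat (summable_nat_rpow.2 (by norm_num : (-2 : ℝ) < -1)) ?_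
  refine ((isBigO_refl (fun k : ℕ => (k : ℝ) ^ a * k ^ m) atTop).mul hexp).congr' ?_ ?_ <;>
    filter_upwards [eventually_gt_atTop 0] with k hk
  · simp
  · have hk' : (0 : ℝ) < k := by exact_mod_cast hk
    rw [← rpow_add_natCast hk'.ne', Function.comp_apply, ← rpow_add hk']
    ring_nf

theorem iteratedDeriv_tsum_of_isOpen {ι : Type*} {f : ι → ℝ → ℝ} {s : Set ℝ} (hs : IsOpen s)
    (hf : ∀ i, ContDiff ℝ ∞ (f i)) {u : ℕ → ι → ℝ} (hu : ∀ m, Summable (u m))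
    (hfu : ∀ m i, ∀ x ∈ s, |iteratedDeriv m (f i) x| ≤ u m i) (m : ℕ) {x : ℝ} (hx : x ∈ s) :
    iteratedDeriv m (fun x => ∑' i, f i x) x = ∑' i, iteratedDeriv m (f i) x := by
  have hwithin (n : ℕ) (h : ℝ → ℝ) : EqOn (iteratedDerivWithin n h s) (iteratedDeriv n h) s :=
    iteratedDerivWithin_of_isOpen hs
  rw [← hwithin m _ hx, iteratedDerivWithin_tsum m hs hx]
  · exact tsum_congr fun i => hwithin m _ hx
  · exact fun t ht => .of_norm_bounded (hu 0) fun i => by simpa using hfu 0 i t ht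
  · refine fun n _ _ => SummableLocallyUniformlyOn_of_locally_bounded hs fun K hK _ =>
      ⟨u n, hu n, fun i t ht => ?_⟩
    rw [hwithin n _ (hK ht)]
    exact hfu n i t (hK ht)
  · intro i n t _ ht
    refine DifferentiableAt.congr_of_eventuallyEq ?_
      ((hwithin n _).eventuallyEq_of_mem (hs.mem_nhds ht))
    exact (hf i).differentiable_iteratedDeriv n (by exact_mod_cast ENat.natCast_lt_top n) t

theorem iteratedDeriv_tsum_rpow_mul_comp_sub {F : ℝ → ℝ} (hF : HasExpBoundedDerivs F) (γ : ℝ)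
    {τ : ℝ} (hτ : 0 < τ) (q : ℕ) (σ : ℝ) :
    iteratedDeriv q (fun σ => ∑' k : ℕ, (k : ℝ) ^ γ * F (σ - k * τ)) σ =
      ∑' k : ℕ, (k : ℝ) ^ γ * iteratedDeriv q F (σ - k * τ) := by
  choose C hC using hF.exists_bound
  have hterm (m k : ℕ) (x : ℝ) :
      iteratedDeriv m (fun σ => (k : ℝ) ^ γ * F (σ - k * τ)) x =
        (k : ℝ) ^ γ * iteratedDeriv m F (x - k * τ) := by
    rw [iteratedDeriv_const_mul_field, iteratedDeriv_comp_sub_const]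
  have hsummable : Summable fun k : ℕ => (k : ℝ) ^ γ * exp (-(τ * k)) := by
    simpa using summable_rpow_mul_pow_mul_exp_neg_mul γ 0 hτ
  have hsmooth (k : ℕ) : ContDiff ℝ ∞ fun σ => (k : ℝ) ^ γ * F (σ - k * τ) :=
    contDiff_const.mul (hF.contDiff.comp (contDiff_id.sub contDiff_const))
  rw [iteratedDeriv_tsum_of_isOpen isOpen_Iio hsmooth
    (fun m => hsummable.mul_left (C m * exp (σ + 1))) ?_ q (lt_add_one σ)]
  · simp only [hterm]
  · intro m k x (hx : x < σ + 1)
    have hC₀ : 0 ≤ C m := nonneg_of_mul_nonneg_left ((abs_nonneg _).trans (hC m 0)) (exp_pos 0)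
    rw [hterm, abs_mul, abs_of_nonneg (by positivity)]
    calc (k : ℝ) ^ γ * |iteratedDeriv m F (x - k * τ)|
        ≤ (k : ℝ) ^ γ * (C m * exp (σ + 1 + -(τ * k))) := by
          gcongr
          refine (hC m _).trans ?_
          gcongr
          linarith
      _ = C m * exp (σ + 1) * ((k : ℝ) ^ γ * exp (-(τ * k))) := by rw [exp_add]; ring

theorem iteratedDeriv_tsum_rpow_mul_comp_const_sub {F : ℝ → ℝ} (hF : HasExpBoundedDerivs F)
    (γ : ℝ) {τ : ℝ} (hτ : 0 < τ) (p : ℕ) (σ : ℝ) :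
    iteratedDeriv p (fun τ => ∑' k : ℕ, (k : ℝ) ^ γ * F (σ - k * τ)) τ =
      (-1) ^ p * ∑' k : ℕ, (k : ℝ) ^ γ * k ^ p * iteratedDeriv p F (σ - k * τ) := by
  choose C hC using hF.exists_bound
  have hterm (m k : ℕ) (x : ℝ) :
      iteratedDeriv m (fun τ => (k : ℝ) ^ γ * F (σ - k * τ)) x =
        (-1) ^ m * ((k : ℝ) ^ γ * k ^ m * iteratedDeriv m F (σ - k * x)) := by
    have hF' : ContDiff ℝ m fun y => F (σ - y) :=
      (hF.contDiff.of_le (by exact_mod_cast le_top)).comp (contDiff_const.sub contDiff_id)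
    rw [iteratedDeriv_const_mul_field, iteratedDeriv_comp_const_mul hF',
      iteratedDeriv_comp_const_sub]
    simp only [smul_eq_mul]
    ring
  have hsmooth (k : ℕ) : ContDiff ℝ ∞ fun τ => (k : ℝ) ^ γ * F (σ - k * τ) :=
    contDiff_const.mul (hF.contDiff.comp (contDiff_const.sub (contDiff_const.mul contDiff_id)))
  rw [iteratedDeriv_tsum_of_isOpen isOpen_Ioi hsmooth
    (fun m => (summable_rpow_mul_pow_mul_exp_neg_mul γ m (half_pos hτ)).mul_left (C m * exp σ))
    ?_ p (half_lt_self hτ)]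
  · simp only [hterm, tsum_mul_left]
  · intro m k x (hx : τ / 2 < x)
    have hC₀ : 0 ≤ C m := nonneg_of_mul_nonneg_left ((abs_nonneg _).trans (hC m 0)) (exp_pos 0)
    rw [hterm, abs_mul, abs_neg_one_pow, one_mul, abs_mul, abs_of_nonneg (by positivity)]
    calc (k : ℝ) ^ γ * k ^ m * |iteratedDeriv m F (σ - k * x)|
        ≤ (k : ℝ) ^ γ * k ^ m * (C m * exp (σ + -(τ / 2 * k))) := by
          gcongr
          refine (hC m _).trans ?_
          gcongr
          nlinarith [k.cast_nonneg (α := ℝ)]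
      _ = C m * exp σ * ((k : ℝ) ^ γ * k ^ m * exp (-(τ / 2 * k))) := by rw [exp_add]; ring

/-! ### The softplus function -/

theorem sigmoid_le_exp (u : ℝ) : sigmoid u ≤ exp u := by
  rw [sigmoid_def, ← inv_inv (exp u), ← exp_neg]
  gcongr
  linarith

theorem exists_polynomial_iteratedDeriv_sigmoid (n : ℕ) :
    ∃ P : Polynomial ℝ, ∀ u, iteratedDeriv n sigmoid u = sigmoid u * P.eval (sigmoid u) := by
  induction n with
  | zero => exact ⟨1, by simp⟩
  | succ n ih =>
    obtain ⟨P, hP⟩ := ih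
    refine ⟨(1 - Polynomial.X) * (P + Polynomial.X * Polynomial.derivative P), fun u => ?_⟩
    have hderiv := (hasDerivAt_sigmoid u).mul ((P.hasDerivAt _).comp u (hasDerivAt_sigmoid u))
    rw [iteratedDeriv_succ, funext hP]
    refine hderiv.deriv.trans ?_
    simp only [Function.comp_apply, Polynomial.eval_mul, Polynomial.eval_sub, Polynomial.eval_add,
      Polynomial.eval_one, Polynomial.eval_X]
    ring

theorem hasExpBoundedDerivs_sigmoid : HasExpBoundedDerivs sigmoid where
  contDiff := contDiff_sigmoid.of_le (by simp)
  exists_bound n := by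
    obtain ⟨P, hP⟩ := exists_polynomial_iteratedDeriv_sigmoid n
    obtain ⟨C, hC⟩ := isCompact_Icc.exists_bound_of_continuousOn
      (s := Icc (0 : ℝ) 1) P.continuous.continuousOn
    have hCs (u : ℝ) := hC (sigmoid u) ⟨sigmoid_nonneg u, sigmoid_le_one u⟩
    refine ⟨C, fun u => ?_⟩
    rw [hP, abs_mul, abs_of_nonneg (sigmoid_nonneg u), mul_comm C]
    exact mul_le_mul (sigmoid_le_exp u) (hCs u) (abs_nonneg _) (exp_pos u).le

/-- The softplus function `log (1 + e ^ u)`, which is summed over translates in `hfun`. -/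
noncomputable def softplus (u : ℝ) : ℝ :=
  log (1 + exp u)

theorem hasDerivAt_softplus (u : ℝ) : HasDerivAt softplus (sigmoid u) u := by
  refine (((hasDerivAt_exp u).const_add 1).log (by positivity)).congr_deriv ?_
  rw [sigmoid_def, exp_neg]
  field_simp
  ring

theorem deriv_softplus : deriv softplus = sigmoid :=
  funext fun u => (hasDerivAt_softplus u).deriv

theorem abs_softplus_le_exp (u : ℝ) : |softplus u| ≤ exp u := by
  have hpos : 1 ≤ 1 + exp u := by linarith [exp_pos u]
  rw [softplus, abs_of_nonneg (log_nonneg hpos)]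
  linarith [log_le_sub_one_of_pos (zero_lt_one.trans_le hpos)]

theorem hasExpBoundedDerivs_softplus : HasExpBoundedDerivs softplus :=
  .of_deriv (fun u => (hasDerivAt_softplus u).differentiableAt)
    (deriv_softplus ▸ hasExpBoundedDerivs_sigmoid) (C := 1) (by simpa using abs_softplus_le_exp)

theorem hfun_eq_tsum {γ : ℝ} {p : ℕ} (hγp : γ + p ≠ 0) (q : ℕ) {τ : ℝ} (hτ : 0 < τ) (σ : ℝ) :
    hfun γ p q τ σ =
      (-1) ^ p * ∑' k : ℕ, (k : ℝ) ^ (γ + p) * iteratedDeriv (p + q) softplus (σ - k * τ) := by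
  have hinner : EqOn
      (fun τ => iteratedDeriv q (fun σ => ∑' k : ℕ, (k : ℝ) ^ γ * softplus (σ - k * τ)) σ)
      (fun τ => ∑' k : ℕ, (k : ℝ) ^ γ * iteratedDeriv q softplus (σ - k * τ)) (Ioi 0) :=
    fun t ht => iteratedDeriv_tsum_rpow_mul_comp_sub hasExpBoundedDerivs_softplus γ ht q σ
  refine (hinner.iteratedDeriv_of_isOpen isOpen_Ioi p hτ).trans ?_
  rw [iteratedDeriv_tsum_rpow_mul_comp_const_sub (hasExpBoundedDerivs_softplus.iteratedDeriv q)
    γ hτ]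
  simp only [iteratedDeriv_eq_iterate, Function.iterate_add_apply,
    rpow_add_natCast' (Nat.cast_nonneg _) hγp]

theorem integral_rpow_mul_sigmoid_const_sub {ν : ℝ} (hν : 0 < ν) (ρ : ℝ) :
    ∫ x in Ioi (0 : ℝ), x ^ (ν - 1) * sigmoid (ρ - x) = -(Gamma ν * negLi ν (exp ρ)) := by
  have hsigmoid (x : ℝ) : sigmoid (ρ - x) = 1 / (exp x / exp ρ + 1) := by
    rw [sigmoid_def, neg_sub, exp_sub, add_comm, one_div]
  have hΓ := (Gamma_pos_of_pos hν).ne'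
  simp only [negLi, hsigmoid, mul_one_div]
  rw [neg_mul, mul_neg, neg_neg, ← mul_assoc, mul_one_div_cancel hΓ, one_mul]

theorem integral_rpow_mul_iteratedDeriv_softplus_const_sub {ν a : ℝ} {m : ℕ} (hν : 0 < ν)
    (ha : -1 < a) (hνa : ν + m = a + 2) (ρ : ℝ) :
    ∫ x in Ioi (0 : ℝ), x ^ a * iteratedDeriv m softplus (ρ - x) =
      -(negLi ν (exp ρ) * Gamma (a + 1)) := by
  have hsigmoid := integral_rpow_mul_sigmoid_const_sub hν ρ
  cases m with
  | zero =>
    have hparts :=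
      integral_rpow_mul_iteratedDeriv_comp_const_sub hasExpBoundedDerivs_softplus ρ ha 1
    obtain rfl : ν = a + 1 + 1 := by push_cast at hνa; linarith
    simp only [iteratedDeriv_one, deriv_softplus, Nat.cast_one] at hparts
    rw [add_sub_cancel_right] at hsigmoid
    rw [hsigmoid] at hparts
    refine mul_left_cancel₀ (Gamma_pos_of_pos hν).ne' ?_
    rw [iteratedDeriv_zero, ← hparts]
    ring
  | succ n =>
    have hparts := integral_rpow_mul_iteratedDeriv_comp_const_sub hasExpBoundedDerivs_sigmoid ρ
      (by linarith : -1 < ν - 1) n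
    obtain rfl : a = ν - 1 + n := by push_cast at hνa; linarith
    rw [hsigmoid, sub_add_cancel] at hparts
    rw [iteratedDeriv_succ', deriv_softplus]
    refine mul_left_cancel₀ (Gamma_pos_of_pos hν).ne' ?_
    rw [hparts]
    ring

theorem hfun_asymptotic_general {γ : ℝ} {p q : ℕ} (hp : 0 < γ + p) (hq : 0 < γ + 2 - q) (ρ : ℝ)
    {ε : ℝ} (hε : 0 < ε) :
    (fun r : ℝ => hfun γ p q r ρ
        - (-1 : ℝ) ^ (p + 1) * negLi (γ + 2 - q) (exp ρ) * Gamma (γ + p + 1)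
          * r ^ (-(γ + p + 1)))
      =O[𝓝[>] 0] fun r : ℝ => r ^ (-ε) := by
  have hsum := tsum_rpow_mul_sub_integral_isBigO
    ((hasExpBoundedDerivs_softplus.iteratedDeriv (p + q)).isSchwartzAtTop_comp_const_sub ρ) hp hε
  rw [integral_rpow_mul_iteratedDeriv_softplus_const_sub hq (by linarith)
    (by push_cast; ring)] at hsum
  refine (hsum.const_mul_left ((-1) ^ p)).congr' ?_ .rfl
  filter_upwards [self_mem_nhdsWithin] with r hr
  simp only [hfun_eq_tsum hp.ne' q hr, mul_comm r]
  ring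

end

/-- Lemma 6: for fixed `ρ`, as `r → 0⁺`,
`h_{γ,p,q}(r,ρ) = (−1)^{p+1} Li_{γ+2−q}(−e^ρ) Γ(γ+p+1) r^{−(γ+p+1)} + O(r^{−1/2})`. -/
theorem hfun_asymptotic (γ : ℝ) (hγ : 0 < γ) (p q : ℕ) (hq : 0 < γ + 2 - q) (ρ : ℝ) :
    (fun r : ℝ => hfun γ p q r ρ
        - (-1 : ℝ) ^ (p + 1) * negLi (γ + 2 - q) (Real.exp ρ) * Real.Gamma (γ + p + 1)
          * r ^ (-(γ + p + 1)))
      =O[nhdsWithin 0 (Set.Ioi 0)] fun r : ℝ => r ^ (-(1/2 : ℝ)) :=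
  hfun_asymptotic_general (by positivity) hq ρ one_half_pos
end

section
/- Let 0<α<1 and let n≥1 be an integer. Let r:ℝ→(0,∞) be the (differentiable) implicit function satisfying n = ∑_{k≥1} k·g(k)/(e^{k·r(ρ)−ρ}+1) for all ρ∈ℝ. Then the function S(ρ) := ∑_{k≥1} g(k)/(e^{k·r(ρ)−ρ}+1) is strictly increasing on ℝ; indeed S'(ρ) = δ(r(ρ),ρ)/f''_{20}(r(ρ),ρ) > 0. -/
open Real

/-- `g α k` is the number of positive integers `n` with `⌊n^α⌋ = k`. -/
noncomputable def g (α : ℝ) (k : ℕ) : ℕ :=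
  Set.ncard {n : ℕ | 1 ≤ n ∧ ⌊(n : ℝ) ^ α⌋ = (k : ℤ)}

/-- the mixed partial derivative `∂^{p+q} f/∂τ^p∂σ^q` of
`f(τ,σ) = ∑_{k≥1} g(k) log(1+e^{σ−kτ})` -/
noncomputable def fpartial (α : ℝ) (p q : ℕ) (τ σ : ℝ) : ℝ :=
  iteratedDeriv p (fun τ' : ℝ => iteratedDeriv q
    (fun σ' : ℝ => ∑' k : ℕ, (g α k : ℝ) * Real.log (1 + Real.exp (σ' - k * τ'))) σ) τ

/-!
Put `M_j = ∑ k^j g(k) φ'(σ - kτ)`, where `φ(x) = 1 / (1 + e⁻ˣ)` is the Fermi function. Since `φ`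
is the derivative of `log (1 + eˣ)`, termwise differentiation gives `f''₂₀ = M₂`, `f''₁₁ = -M₁`
and `f''₀₂ = M₀`. Differentiating the constraint along `σ = ρ`, `τ = r(ρ)` yields
`M₁ - M₂ r' = 0`, hence `S' = M₀ - M₁ r' = (M₂ M₀ - M₁²) / M₂`. The numerator is positive by the
strict Cauchy–Schwarz inequality, because the weight `g` charges at least two integers.
-/

open Asymptotics Filter Topology

section CauchySchwarz

variable {ι : Type*} {p x : ι → ℝ}

lemma hasSum_sub_sq_mul (h₀ : Summable p) (h₁ : Summable fun i ↦ x i * p i)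
    (h₂ : Summable fun i ↦ x i ^ 2 * p i) (t : ℝ) :
    HasSum (fun i ↦ (x i - t) ^ 2 * p i)
      ((∑' i, p i) * (t * t) + -2 * (∑' i, x i * p i) * t + ∑' i, x i ^ 2 * p i) := by
  convert! ((h₀.hasSum.mul_right (t * t)).add (h₁.hasSum.mul_left (-2 * t))).add h₂.hasSum using 1
  · ext i
    ring
  · ring

lemma sq_tsum_mul_lt (hp : ∀ i, 0 ≤ p i) (h₀ : Summable p) (h₁ : Summable fun i ↦ x i * p i)
    (h₂ : Summable fun i ↦ x i ^ 2 * p i) {i j : ι} (hi : 0 < p i) (hj : 0 < p j)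
    (hij : x i ≠ x j) :
    (∑' i, x i * p i) ^ 2 < (∑' i, x i ^ 2 * p i) * ∑' i, p i := by
  have quadratic_pos (t : ℝ) :
      0 < (∑' i, p i) * (t * t) + -2 * (∑' i, x i * p i) * t + ∑' i, x i ^ 2 * p i := by
    have hsum := hasSum_sub_sq_mul h₀ h₁ h₂ t
    obtain ⟨l, hl, hlt⟩ : ∃ l, 0 < p l ∧ x l ≠ t := by
      by_cases hit : x i = t
      · exact ⟨j, hj, fun hjt ↦ hij (hit.trans hjt.symm)⟩
      · exact ⟨i, hi, hit⟩
    rw [← hsum.tsum_eq]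
    exact hsum.summable.tsum_pos (fun i ↦ mul_nonneg (sq_nonneg _) (hp i)) l
      (mul_pos (sq_pos_of_ne_zero (sub_ne_zero.2 hlt)) hl)
  have hdiscrim := discrim_lt_zero (h₀.tsum_pos hp i hi).ne' quadratic_pos
  rw [discrim] at hdiscrim
  linarith

end CauchySchwarz

/-- Subexponential growth of a real sequence, which makes the sums `∑ w k * exp (σ - k * τ)`
converge absolutely for every `τ > 0`. -/
def SubexpGrowth (w : ℕ → ℝ) : Prop :=
  ∀ a : ℝ, 0 < a → w =O[atTop] fun k : ℕ ↦ exp (a * k)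

/-- The `j`-th moment of the weights `w k * φ (σ - k * τ)`, where `φ` is a function of the reduced
energy such as the Fermi function or its derivative. -/
noncomputable def moment (w : ℕ → ℝ) (φ : ℝ → ℝ) (j : ℕ) (τ σ : ℝ) : ℝ :=
  ∑' k : ℕ, (k : ℝ) ^ j * w k * φ (σ - k * τ)

section Moments

variable {w : ℕ → ℝ} {φ φ' : ℝ → ℝ} {τ : ℝ}

namespace SubexpGrowth

lemma pow_mul (hw : SubexpGrowth w) (j : ℕ) : SubexpGrowth fun k ↦ (k : ℝ) ^ j * w k := by
  intro a ha
  have hpow : (fun k : ℕ ↦ (k : ℝ) ^ j) =O[atTop] fun k : ℕ ↦ exp (a / 2 * k) :=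
    (isLittleO_pow_exp_pos_mul_atTop j (half_pos ha)).isBigO.comp_tendsto
      tendsto_natCast_atTop_atTop
  refine (hpow.mul (hw _ (half_pos ha))).congr_right fun k ↦ ?_
  rw [← exp_add]
  ring_nf

lemma summable_abs_mul_exp (hw : SubexpGrowth w) (hτ : 0 < τ) (σ : ℝ) :
    Summable fun k : ℕ ↦ |w k| * exp (σ - k * τ) := by
  have hgeom : Summable fun k : ℕ ↦ exp (k * -(τ / 2)) :=
    summable_exp_nat_mul_iff.2 (neg_lt_zero.2 (half_pos hτ))
  refine summable_of_isBigO_nat (hgeom.mul_left (exp σ)) ?_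
  refine ((hw _ (half_pos hτ)).abs_left.mul (isBigO_refl _ _)).congr_right fun k ↦ ?_
  simp only [← exp_add]
  ring_nf

lemma summable_moment (hw : SubexpGrowth w) (hφ : ∀ x, |φ x| ≤ exp x) (j : ℕ) (hτ : 0 < τ)
    (σ : ℝ) : Summable fun k : ℕ ↦ (k : ℝ) ^ j * w k * φ (σ - k * τ) := by
  refine ((hw.pow_mul j).summable_abs_mul_exp hτ σ).of_norm_bounded fun k ↦ ?_
  rw [norm_eq_abs, abs_mul]
  gcongr
  exact hφ _

end SubexpGrowth

lemma hasFDerivAt_comp_sub_mul (hφ : ∀ x, HasDerivAt φ (φ' x) x) (c k : ℝ) (p : ℝ × ℝ) :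
    HasFDerivAt (fun p : ℝ × ℝ ↦ c * φ (p.2 - k * p.1))
      ((c * φ' (p.2 - k * p.1)) • ContinuousLinearMap.snd ℝ ℝ ℝ
        - (k * c * φ' (p.2 - k * p.1)) • ContinuousLinearMap.fst ℝ ℝ ℝ) p := by
  have hinner : HasFDerivAt (fun p : ℝ × ℝ ↦ p.2 - k * p.1)
      (ContinuousLinearMap.snd ℝ ℝ ℝ - k • ContinuousLinearMap.fst ℝ ℝ ℝ) p :=
    hasFDerivAt_snd.sub (hasFDerivAt_fst.const_mul k)
  refine (((hφ _).comp_hasFDerivAt p hinner).const_mul c).congr_fderiv ?_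
  module

lemma norm_smul_snd_sub_smul_fst_le (a b : ℝ) :
    ‖a • ContinuousLinearMap.snd ℝ ℝ ℝ - b • ContinuousLinearMap.fst ℝ ℝ ℝ‖ ≤ |a| + |b| := by
  refine (norm_sub_le _ _).trans (add_le_add ?_ ?_) <;> rw [norm_smul, norm_eq_abs]
  · exact mul_le_of_le_one_right (abs_nonneg a) (ContinuousLinearMap.norm_snd_le ℝ ℝ ℝ)
  · exact mul_le_of_le_one_right (abs_nonneg b) (ContinuousLinearMap.norm_fst_le ℝ ℝ ℝ)

lemma SubexpGrowth.hasFDerivAt_moment (hw : SubexpGrowth w) (hφ : ∀ x, |φ x| ≤ exp x)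
    (hφ' : ∀ x, |φ' x| ≤ exp x) (hderiv : ∀ x, HasDerivAt φ (φ' x) x) (j : ℕ) (hτ : 0 < τ)
    (σ : ℝ) :
    HasFDerivAt (fun p : ℝ × ℝ ↦ moment w φ j p.1 p.2)
      (moment w φ' j τ σ • ContinuousLinearMap.snd ℝ ℝ ℝ
        - moment w φ' (j + 1) τ σ • ContinuousLinearMap.fst ℝ ℝ ℝ) (τ, σ) := by
  -- Bounding `τ` away from `0` and `σ` from above makes the derivatives summable uniformly.
  have hmem : (τ, σ) ∈ Set.Ioi (τ / 2) ×ˢ Set.Iio (σ + 1) := ⟨half_lt_self hτ, lt_add_one σ⟩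
  have hbound (i : ℕ) := (hw.pow_mul i).summable_abs_mul_exp (half_pos hτ) (σ + 1)
  have hsum := hasFDerivAt_tsum_of_isPreconnected ((hbound j).add (hbound (j + 1)))
    (isOpen_Ioi.prod isOpen_Iio) ((convex_Ioi _).prod (convex_Iio _)).isPreconnected
    (fun k p _ ↦ hasFDerivAt_comp_sub_mul hderiv ((k : ℝ) ^ j * w k) k p) ?_ hmem
    (hw.summable_moment hφ j hτ σ) hmem
  · refine hsum.congr_fderiv ?_
    simp only [← mul_assoc, ← pow_succ']
    exact (((hw.summable_moment hφ' j hτ σ).hasSum.smul_const _).sub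
      ((hw.summable_moment hφ' (j + 1) hτ σ).hasSum.smul_const _)).tsum_eq
  · rintro k ⟨τ', σ'⟩ ⟨hτ', hσ'⟩
    have hφ'_le : |φ' (σ' - k * τ')| ≤ exp (σ + 1 - k * (τ / 2)) := by
      refine (hφ' _).trans (exp_le_exp.2 (sub_le_sub hσ'.le ?_))
      gcongr
      exact hτ'.le
    refine (norm_smul_snd_sub_smul_fst_le _ _).trans ?_
    rw [← mul_assoc, ← pow_succ', abs_mul, abs_mul _ (φ' _)]
    gcongr

lemma SubexpGrowth.hasDerivAt_moment_comp (hw : SubexpGrowth w) (hφ : ∀ x, |φ x| ≤ exp x)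
    (hφ' : ∀ x, |φ' x| ≤ exp x) (hderiv : ∀ x, HasDerivAt φ (φ' x) x) (j : ℕ) {u v : ℝ → ℝ}
    {u' v' t : ℝ} (hu : HasDerivAt u u' t) (hv : HasDerivAt v v' t) (hut : 0 < u t) :
    HasDerivAt (fun s ↦ moment w φ j (u s) (v s))
      (moment w φ' j (u t) (v t) * v' - moment w φ' (j + 1) (u t) (v t) * u') t := by
  simpa [Function.comp_def] using
    (hw.hasFDerivAt_moment hφ hφ' hderiv j hut (v t)).comp_hasDerivAt t (hu.prodMk hv)

lemma SubexpGrowth.hasDerivAt_moment_left (hw : SubexpGrowth w) (hφ : ∀ x, |φ x| ≤ exp x)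
    (hφ' : ∀ x, |φ' x| ≤ exp x) (hderiv : ∀ x, HasDerivAt φ (φ' x) x) (j : ℕ) (hτ : 0 < τ)
    (σ : ℝ) : HasDerivAt (fun τ ↦ moment w φ j τ σ) (-moment w φ' (j + 1) τ σ) τ := by
  simpa using
    hw.hasDerivAt_moment_comp hφ hφ' hderiv j (hasDerivAt_id τ) (hasDerivAt_const τ σ) hτ

lemma SubexpGrowth.hasDerivAt_moment_right (hw : SubexpGrowth w) (hφ : ∀ x, |φ x| ≤ exp x)
    (hφ' : ∀ x, |φ' x| ≤ exp x) (hderiv : ∀ x, HasDerivAt φ (φ' x) x) (j : ℕ) (hτ : 0 < τ)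
    (σ : ℝ) : HasDerivAt (moment w φ j τ) (moment w φ' j τ σ) σ := by
  simpa using
    hw.hasDerivAt_moment_comp hφ hφ' hderiv j (hasDerivAt_const σ τ) (hasDerivAt_id σ) hτ

lemma SubexpGrowth.hasDerivAt_moment_zero_of_moment_one_eq (hw : SubexpGrowth w)
    (hφ : ∀ x, |φ x| ≤ exp x) (hφ' : ∀ x, |φ' x| ≤ exp x) (hderiv : ∀ x, HasDerivAt φ (φ' x) x)
    {r : ℝ → ℝ} {ρ N : ℝ} (hr : DifferentiableAt ℝ r ρ) (hrpos : 0 < r ρ)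
    (hN : ∀ s, moment w φ 1 (r s) s = N) (hne : moment w φ' 2 (r ρ) ρ ≠ 0) :
    HasDerivAt (fun s ↦ moment w φ 0 (r s) s)
      ((moment w φ' 2 (r ρ) ρ * moment w φ' 0 (r ρ) ρ - moment w φ' 1 (r ρ) ρ ^ 2)
        / moment w φ' 2 (r ρ) ρ) ρ := by
  have hmoment (j : ℕ) := hw.hasDerivAt_moment_comp hφ hφ' hderiv j hr.hasDerivAt
    (hasDerivAt_id' ρ) hrpos
  have hconstraint : moment w φ' 1 (r ρ) ρ * 1 - moment w φ' 2 (r ρ) ρ * deriv r ρ = 0 :=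
    (hmoment 1).unique (by simpa only [hN] using hasDerivAt_const ρ N)
  refine (hmoment 0).congr_deriv ?_
  rw [eq_div_iff hne]
  linear_combination moment w φ' 1 (r ρ) ρ * hconstraint

lemma SubexpGrowth.sq_moment_one_lt (hw : SubexpGrowth w) (hw₀ : ∀ k, 0 ≤ w k)
    (hw₂ : w.support.Nontrivial) (hφ : ∀ x, |φ x| ≤ exp x) (hφpos : ∀ x, 0 < φ x) (hτ : 0 < τ)
    (σ : ℝ) : moment w φ 1 τ σ ^ 2 < moment w φ 2 τ σ * moment w φ 0 τ σ := by
  obtain ⟨i, hi, j, hj, hij⟩ := hw₂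
  have hpos {k : ℕ} (hk : w k ≠ 0) : 0 < w k * φ (σ - k * τ) :=
    mul_pos ((hw₀ k).lt_of_ne' hk) (hφpos _)
  have hsum (j : ℕ) := hw.summable_moment hφ j hτ σ
  have := sq_tsum_mul_lt (x := fun k : ℕ ↦ (k : ℝ))
    (fun k ↦ mul_nonneg (hw₀ k) (hφpos (σ - k * τ)).le) (by simpa using hsum 0)
    (by simpa [mul_assoc] using hsum 1) (by simpa [mul_assoc] using hsum 2) (hpos hi) (hpos hj)
    (Nat.cast_injective.ne hij)
  simpa [moment, mul_assoc] using this

end Moments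

section FermiFunction

lemma sigmoid_sub (x y : ℝ) : sigmoid (x - y) = 1 / (exp (y - x) + 1) := by
  rw [sigmoid_def, neg_sub, add_comm, one_div]

lemma abs_sigmoid_le_exp (x : ℝ) : |sigmoid x| ≤ exp x := by
  have h := sigmoid_mul_rexp_neg x ▸ sigmoid_le_one (-x)
  rwa [abs_of_pos (sigmoid_pos x), ← one_mul (exp x), ← div_le_iff₀ (exp_pos x), div_eq_mul_inv,
    ← exp_neg]

lemma deriv_sigmoid_pos (x : ℝ) : 0 < deriv sigmoid x := by
  rw [deriv_sigmoid]
  exact mul_pos (sigmoid_pos x) (sub_pos.2 (sigmoid_lt_one x))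

lemma abs_deriv_sigmoid_le_exp (x : ℝ) : |deriv sigmoid x| ≤ exp x := by
  rw [abs_of_pos (deriv_sigmoid_pos x), deriv_sigmoid]
  calc sigmoid x * (1 - sigmoid x)
      ≤ sigmoid x := mul_le_of_le_one_right (sigmoid_nonneg x) (by linarith [sigmoid_nonneg x])
    _ ≤ exp x := (le_abs_self _).trans (abs_sigmoid_le_exp x)

lemma abs_log_one_add_exp_le_exp (x : ℝ) : |log (1 + exp x)| ≤ exp x := by
  have hpos := exp_pos x
  rw [abs_of_nonneg (log_nonneg (by linarith))]
  linarith [log_le_sub_one_of_pos (show 0 < 1 + exp x by linarith)]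

lemma hasDerivAt_log_one_add_exp (x : ℝ) :
    HasDerivAt (fun x ↦ log (1 + exp x)) (sigmoid x) x := by
  refine (((hasDerivAt_exp x).const_add 1).log (by positivity)).congr_deriv ?_
  rw [sigmoid_def, exp_neg]
  field_simp
  ring

end FermiFunction

/-- The logarithm of the grand canonical partition function of a Fermi gas with `w k` states of
energy `k`; for `w = g α` it is the function `f` of the paper. -/
noncomputable def logPartition (w : ℕ → ℝ) (τ σ : ℝ) : ℝ :=
  ∑' k : ℕ, w k * log (1 + exp (σ - k * τ))

/-- The mixed partial derivative `∂^{p+q}/∂τ^p∂σ^q` of `logPartition w`, which specializes to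
`fpartial α` for `w = g α`. -/
noncomputable def logPartitionPartial (w : ℕ → ℝ) (p q : ℕ) (τ σ : ℝ) : ℝ :=
  iteratedDeriv p (fun τ' ↦ iteratedDeriv q (logPartition w τ') σ) τ

section LogPartition

variable {w : ℕ → ℝ} {τ : ℝ}

lemma logPartition_eq_moment (w : ℕ → ℝ) (τ σ : ℝ) :
    logPartition w τ σ = moment w (fun x ↦ log (1 + exp x)) 0 τ σ := by
  simp only [logPartition, moment, pow_zero, one_mul]

namespace SubexpGrowth

lemma deriv_logPartition_left (hw : SubexpGrowth w) (hτ : 0 < τ) (σ : ℝ) :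
    deriv (fun τ ↦ logPartition w τ σ) τ = -moment w sigmoid 1 τ σ := by
  simpa only [logPartition_eq_moment] using
    (hw.hasDerivAt_moment_left abs_log_one_add_exp_le_exp abs_sigmoid_le_exp
      hasDerivAt_log_one_add_exp 0 hτ σ).deriv

lemma deriv_logPartition_right (hw : SubexpGrowth w) (hτ : 0 < τ) (σ : ℝ) :
    deriv (logPartition w τ) σ = moment w sigmoid 0 τ σ := by
  rw [funext (logPartition_eq_moment w τ)]
  exact (hw.hasDerivAt_moment_right abs_log_one_add_exp_le_exp abs_sigmoid_le_exp
    hasDerivAt_log_one_add_exp 0 hτ σ).deriv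

lemma deriv_moment_sigmoid_left (hw : SubexpGrowth w) (j : ℕ) (hτ : 0 < τ) (σ : ℝ) :
    deriv (fun τ ↦ moment w sigmoid j τ σ) τ = -moment w (deriv sigmoid) (j + 1) τ σ :=
  (hw.hasDerivAt_moment_left abs_sigmoid_le_exp abs_deriv_sigmoid_le_exp
    (fun _ ↦ differentiableAt_sigmoid.hasDerivAt) j hτ σ).deriv

lemma deriv_moment_sigmoid_right (hw : SubexpGrowth w) (j : ℕ) (hτ : 0 < τ) (σ : ℝ) :
    deriv (moment w sigmoid j τ) σ = moment w (deriv sigmoid) j τ σ :=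
  (hw.hasDerivAt_moment_right abs_sigmoid_le_exp abs_deriv_sigmoid_le_exp
    (fun _ ↦ differentiableAt_sigmoid.hasDerivAt) j hτ σ).deriv

lemma logPartitionPartial_two_zero (hw : SubexpGrowth w) (hτ : 0 < τ) (σ : ℝ) :
    logPartitionPartial w 2 0 τ σ = moment w (deriv sigmoid) 2 τ σ := by
  simp only [logPartitionPartial, iteratedDeriv_zero, iteratedDeriv_succ]
  have hfirst : deriv (fun τ ↦ logPartition w τ σ) =ᶠ[𝓝 τ] fun τ ↦ -moment w sigmoid 1 τ σ := by
    filter_upwards [lt_mem_nhds hτ] with t ht using hw.deriv_logPartition_left ht σ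
  rw [hfirst.deriv_eq, deriv.fun_neg, hw.deriv_moment_sigmoid_left 1 hτ σ, neg_neg]

lemma logPartitionPartial_one_one (hw : SubexpGrowth w) (hτ : 0 < τ) (σ : ℝ) :
    logPartitionPartial w 1 1 τ σ = -moment w (deriv sigmoid) 1 τ σ := by
  simp only [logPartitionPartial, iteratedDeriv_one]
  have hfirst : (fun τ ↦ deriv (logPartition w τ) σ) =ᶠ[𝓝 τ] fun τ ↦ moment w sigmoid 0 τ σ := by
    filter_upwards [lt_mem_nhds hτ] with t ht using hw.deriv_logPartition_right ht σ
  rw [hfirst.deriv_eq, hw.deriv_moment_sigmoid_left 0 hτ σ]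

lemma logPartitionPartial_zero_two (hw : SubexpGrowth w) (hτ : 0 < τ) (σ : ℝ) :
    logPartitionPartial w 0 2 τ σ = moment w (deriv sigmoid) 0 τ σ := by
  simp only [logPartitionPartial, iteratedDeriv_zero, iteratedDeriv_succ]
  rw [funext (hw.deriv_logPartition_right hτ), hw.deriv_moment_sigmoid_right 0 hτ σ]

end SubexpGrowth

lemma tsum_div_exp_add_one_eq_moment (w : ℕ → ℝ) (τ σ : ℝ) :
    ∑' k : ℕ, w k / (exp (k * τ - σ) + 1) = moment w sigmoid 0 τ σ := by
  simp only [moment, sigmoid_sub, pow_zero, one_mul, mul_one_div]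

lemma tsum_mul_div_exp_add_one_eq_moment (w : ℕ → ℝ) (τ σ : ℝ) :
    ∑' k : ℕ, (k : ℝ) * w k / (exp (k * τ - σ) + 1) = moment w sigmoid 1 τ σ := by
  simp only [moment, sigmoid_sub, pow_one, mul_one_div]

end LogPartition

theorem S_strictMono_general {w : ℕ → ℝ} (hw : SubexpGrowth w) (hw₀ : ∀ k, 0 ≤ w k)
    (hw₂ : w.support.Nontrivial) {N : ℝ} {r : ℝ → ℝ} (hrpos : ∀ ρ, 0 < r ρ)
    (hrdiff : Differentiable ℝ r)
    (hreq : ∀ ρ, N = ∑' k : ℕ, (k : ℝ) * w k / (exp (k * r ρ - ρ) + 1)) :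
    StrictMono (fun ρ ↦ ∑' k : ℕ, w k / (exp (k * r ρ - ρ) + 1)) ∧
    ∀ ρ,
      HasDerivAt (fun ρ' ↦ ∑' k : ℕ, w k / (exp (k * r ρ' - ρ') + 1))
        ((logPartitionPartial w 2 0 (r ρ) ρ * logPartitionPartial w 0 2 (r ρ) ρ
          - (logPartitionPartial w 1 1 (r ρ) ρ) ^ 2) / logPartitionPartial w 2 0 (r ρ) ρ) ρ ∧
      0 < (logPartitionPartial w 2 0 (r ρ) ρ * logPartitionPartial w 0 2 (r ρ) ρ
          - (logPartitionPartial w 1 1 (r ρ) ρ) ^ 2) / logPartitionPartial w 2 0 (r ρ) ρ := by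
  simp only [tsum_mul_div_exp_add_one_eq_moment] at hreq
  simp only [tsum_div_exp_add_one_eq_moment, hw.logPartitionPartial_two_zero (hrpos _),
    hw.logPartitionPartial_one_one (hrpos _), hw.logPartitionPartial_zero_two (hrpos _), neg_sq]
  have hcs (ρ : ℝ) :=
    hw.sq_moment_one_lt hw₀ hw₂ abs_deriv_sigmoid_le_exp deriv_sigmoid_pos (hrpos ρ) ρ
  have hM₂ (ρ : ℝ) : 0 < moment w (deriv sigmoid) 2 (r ρ) ρ :=
    pos_of_mul_pos_left ((sq_nonneg _).trans_lt (hcs ρ)) <| tsum_nonneg fun k ↦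
      mul_nonneg (mul_nonneg (by positivity) (hw₀ k)) (deriv_sigmoid_pos _).le
  have hderiv (ρ : ℝ) := hw.hasDerivAt_moment_zero_of_moment_one_eq abs_sigmoid_le_exp
    abs_deriv_sigmoid_le_exp (fun _ ↦ differentiableAt_sigmoid.hasDerivAt) (hrdiff ρ) (hrpos ρ)
    (fun s ↦ (hreq s).symm) (hM₂ ρ).ne'
  have hpos (ρ : ℝ) := div_pos (sub_pos.2 (hcs ρ)) (hM₂ ρ)
  exact ⟨strictMono_of_hasDerivAt_pos hderiv hpos, fun ρ ↦ ⟨hderiv ρ, hpos ρ⟩⟩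

section FloorPowerFibers

variable {α : ℝ}

lemma floor_rpow_fiber_subset (hα : 0 < α) (k : ℕ) :
    {n : ℕ | 1 ≤ n ∧ ⌊(n : ℝ) ^ α⌋ = (k : ℤ)} ⊆ Finset.Icc 1 ⌊((k : ℝ) + 1) ^ α⁻¹⌋₊ := by
  rintro n ⟨hn, hnk⟩
  have hlt : (n : ℝ) ^ α < (k : ℝ) + 1 := by
    simpa [hnk] using Int.lt_floor_add_one ((n : ℝ) ^ α)
  have hle := ((lt_rpow_inv_iff_of_pos n.cast_nonneg (by positivity) hα).2 hlt).le
  exact Finset.mem_coe.2 (Finset.mem_Icc.2 ⟨hn, Nat.le_floor hle⟩)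

lemma g_le_rpow (hα : 0 < α) (k : ℕ) : (g α k : ℝ) ≤ ((k : ℝ) + 1) ^ α⁻¹ := by
  have hcard := Set.ncard_le_ncard (floor_rpow_fiber_subset hα k) (Finset.finite_toSet _)
  rw [Set.ncard_coe_finset, Nat.card_Icc, Nat.add_sub_cancel] at hcard
  exact (Nat.le_floor_iff (by positivity)).1 hcard

lemma subexpGrowth_g (hα : 0 < α) : SubexpGrowth fun k ↦ g α k := by
  intro a ha
  have hshift : Tendsto (fun k : ℕ ↦ (k : ℝ) + 1) atTop atTop :=
    tendsto_natCast_atTop_atTop.atTop_add tendsto_const_nhds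
  have hrpow := (isLittleO_rpow_exp_pos_mul_atTop α⁻¹ ha).isBigO.comp_tendsto hshift
  have hexp : (fun k : ℕ ↦ exp (a * (k + 1))) =O[atTop] fun k : ℕ ↦ exp (a * k) := by
    simp only [mul_add, exp_add, mul_comm _ (exp (a * 1))]
    exact (isBigO_refl _ _).const_mul_left _
  refine (IsBigO.of_norm_le fun k ↦ ?_).trans (hrpow.trans hexp)
  simpa using g_le_rpow hα k

lemma g_ne_zero (hα : 0 < α) {n k : ℕ} (hn : 1 ≤ n) (hnk : ⌊(n : ℝ) ^ α⌋ = (k : ℤ)) :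
    g α k ≠ 0 :=
  Set.ncard_ne_zero_of_mem ⟨hn, hnk⟩
    ((Finset.finite_toSet _).subset (floor_rpow_fiber_subset hα k))

lemma support_g_nontrivial (hα : 0 < α) :
    (Function.support fun k ↦ (g α k : ℝ)).Nontrivial := by
  obtain ⟨n, hn, hn2⟩ : ∃ n : ℕ, 1 ≤ n ∧ 2 ≤ (n : ℝ) ^ α :=
    ((eventually_ge_atTop 1).and (((tendsto_rpow_atTop hα).comp
      tendsto_natCast_atTop_atTop).eventually_ge_atTop 2)).exists
  have hfloor : 2 ≤ ⌊(n : ℝ) ^ α⌋₊ := Nat.le_floor hn2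
  refine ⟨1, ?_, ⌊(n : ℝ) ^ α⌋₊, ?_, by omega⟩
  · exact Nat.cast_ne_zero.2 (g_ne_zero hα le_rfl (by simp))
  · exact Nat.cast_ne_zero.2 (g_ne_zero hα hn (Int.natCast_floor_eq_floor (by positivity)).symm)

end FloorPowerFibers

/-- `S(ρ) = ∑_{k≥1} g(k)/(e^{k r(ρ) − ρ}+1)` is strictly increasing, with
`S'(ρ) = δ(r(ρ),ρ)/f''_{20}(r(ρ),ρ) > 0`, where `r(ρ)` is the implicit function
solving `n = ∑_{k≥1} k g(k)/(e^{k r(ρ) − ρ}+1)`. -/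
theorem S_strictMono (α : ℝ) (hα : 0 < α ∧ α < 1) (n : ℕ) (hn : 1 ≤ n)
    (r : ℝ → ℝ) (hrpos : ∀ ρ : ℝ, 0 < r ρ) (hrdiff : Differentiable ℝ r)
    (hreq : ∀ ρ : ℝ, (n : ℝ) = ∑' k : ℕ, (k : ℝ) * g α k / (Real.exp (k * r ρ - ρ) + 1)) :
    StrictMono (fun ρ : ℝ => ∑' k : ℕ, (g α k : ℝ) / (Real.exp (k * r ρ - ρ) + 1)) ∧
    ∀ ρ : ℝ,
      HasDerivAt (fun ρ' : ℝ => ∑' k : ℕ, (g α k : ℝ) / (Real.exp (k * r ρ' - ρ') + 1))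
        ((fpartial α 2 0 (r ρ) ρ * fpartial α 0 2 (r ρ) ρ - (fpartial α 1 1 (r ρ) ρ) ^ 2)
          / fpartial α 2 0 (r ρ) ρ) ρ ∧
      0 < (fpartial α 2 0 (r ρ) ρ * fpartial α 0 2 (r ρ) ρ - (fpartial α 1 1 (r ρ) ρ) ^ 2)
          / fpartial α 2 0 (r ρ) ρ :=
  S_strictMono_general (subexpGrowth_g hα.1) (fun _ ↦ Nat.cast_nonneg _)
    (support_g_nontrivial hα.1) hrpos hrdiff hreq
end

section
/- Let 0<α<1 and β:=1/α. There exist constants c>0 and r₀>0 depending only on α such that for all 0<r<r₀, all ρ∈ℝ, and all reals t,θ with r^{1+3β/7} < |t| ≤ π and |θ| ≤ π, one has |Q(e^{−(r+it)}, e^{ρ+iθ})| / Q(e^{−r}, e^ρ) ≤ exp(−c·(e^ρ/(1+e^ρ)²)·r^{−β/7}). -/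
/-!
Since `‖1 + w‖² = (1 + ‖w‖)² - 2 (‖w‖ - Re w)`, the factor `1 + u z ^ n` of `Q(z, u)` is smaller
in modulus than the factor `1 + ‖u‖ ‖z‖ ^ n` of `Q(‖z‖, ‖u‖)`, the logarithms differing by at
least `(‖w‖ - Re w) / (1 + ‖w‖)²` for `w = u z ^ n`, which has phase `θ - t n`. For `n` between
`M ≈ 1 / r` and `3 M` the modulus of `w` is comparable to `e ^ ρ`, and `g n` is at least of order
`M ^ (1 / α - 1)`. The phases cannot all be near multiples of `2 π`: with `m ≤ M` chosen so that
`min 1 (|t| M) ≤ |t| m ≤ π`, the phases at `n` and `n + m` differ by `t m`, so one of the two is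
at distance at least of order `min 1 (|t| / r)` from `2 π ℤ`. Summing over `n`, the total loss in
the exponent is at least of order `r ^ (-1 / α) * min 1 (|t| / r) ^ 2` times
`e ^ ρ / (1 + e ^ ρ) ^ 2`.
-/

open Real Complex

/-- `Q(z,u) = ∏_{k≥1} (1 + u z^k)^{g(k)}` -/
noncomputable def Q (α : ℝ) (z u : ℂ) : ℂ :=
  ∏' k : ℕ, (1 + u * z ^ (k + 1)) ^ g α (k + 1)

section CosineSums

lemma sin_sq_half_sub_le (a b : ℝ) :
    Real.sin ((a - b) / 2) ^ 2 ≤ (1 - Real.cos a) + (1 - Real.cos b) := by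
  have hsum := Real.cos_add_cos a b
  linarith [Real.sin_sq_add_cos_sq ((a - b) / 2), Real.cos_sq_le_one ((a + b) / 2),
    sq_nonneg (Real.cos ((a + b) / 2) - Real.cos ((a - b) / 2))]

lemma sq_sub_div_pi_le {a b : ℝ} (h : |a - b| ≤ π) :
    ((a - b) / π) ^ 2 ≤ (1 - Real.cos a) + (1 - Real.cos b) := by
  have hsin : 2 / π * |(a - b) / 2| ≤ |Real.sin ((a - b) / 2)| :=
    Real.mul_abs_le_abs_sin (by rw [abs_div, abs_two]; linarith)
  calc ((a - b) / π) ^ 2 = (2 / π * |(a - b) / 2|) ^ 2 := by rw [mul_pow, sq_abs]; ring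
    _ ≤ |Real.sin ((a - b) / 2)| ^ 2 := by gcongr
    _ ≤ (1 - Real.cos a) + (1 - Real.cos b) := by rw [sq_abs]; exact sin_sq_half_sub_le a b

lemma exists_nat_le_mul_le_and_min_le_mul {x y : ℝ} (hx : 0 ≤ x) (hxy : x ≤ y) (M : ℕ) :
    ∃ m ≤ M, x * m ≤ y ∧ min (y / 2) (x * M) ≤ x * m := by
  by_cases hM : x * M ≤ y
  · exact ⟨M, le_rfl, hM, min_le_right _ _⟩
  have hx0 : 0 < x := hx.lt_of_ne' fun h => hM (by simpa [h] using hx.trans hxy)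
  have hfloor : x * ⌊y / x⌋₊ ≤ y :=
    (le_div_iff₀' hx0).1 (Nat.floor_le (div_nonneg (hx.trans hxy) hx))
  refine ⟨⌊y / x⌋₊, ?_, hfloor, (min_le_left _ _).trans ?_⟩
  · exact Nat.floor_le_of_le ((div_le_iff₀' hx0).2 (not_le.1 hM).le)
  · calc y / 2 = x * (y / x / 2) := by field_simp
      _ ≤ x * ⌊y / x⌋₊ := by
        gcongr
        exact (Nat.div_two_lt_floor ((one_le_div hx0).2 hxy)).le

lemma mul_le_two_mul_sum_Ico_of_le_add {f : ℕ → ℝ} (hf : ∀ n, 0 ≤ f n) {δ : ℝ} {m M : ℕ}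
    (hm : m ≤ M) (hδ : ∀ n, δ ≤ f n + f (n + m)) (a : ℕ) :
    M * δ ≤ 2 * ∑ n ∈ Finset.Ico a (a + 2 * M), f n := by
  have hsub {b c : ℕ} (hb : a ≤ b) (hc : c ≤ a + 2 * M) :
      ∑ n ∈ Finset.Ico b c, f n ≤ ∑ n ∈ Finset.Ico a (a + 2 * M), f n :=
    Finset.sum_le_sum_of_subset_of_nonneg (Finset.Ico_subset_Ico hb hc) fun n _ _ => hf n
  calc M * δ = ∑ _n ∈ Finset.Ico a (a + M), δ := by simp
    _ ≤ ∑ n ∈ Finset.Ico a (a + M), (f n + f (n + m)) := Finset.sum_le_sum fun n _ => hδ n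
    _ = ∑ n ∈ Finset.Ico a (a + M), f n + ∑ n ∈ Finset.Ico (a + m) (a + M + m), f n := by
      rw [Finset.sum_add_distrib, Finset.sum_Ico_add']
    _ ≤ 2 * ∑ n ∈ Finset.Ico a (a + 2 * M), f n := by
      linarith [hsub le_rfl (show a + M ≤ a + 2 * M by omega),
        hsub (Nat.le_add_right a m) (show a + M + m ≤ a + 2 * M by omega)]

lemma mul_sq_min_div_pi_le_sum_one_sub_cos {t : ℝ} (ht : |t| ≤ π) (θ : ℝ) (a M : ℕ) :
    M * (min 1 (|t| * M) / π) ^ 2 ≤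
      2 * ∑ n ∈ Finset.Ico a (a + 2 * M), (1 - Real.cos (θ - t * n)) := by
  obtain ⟨m, hmM, hmπ, hm⟩ := exists_nat_le_mul_le_and_min_le_mul (abs_nonneg t) ht M
  have hone : (1 : ℝ) ≤ π / 2 := by linarith [Real.two_le_pi]
  refine mul_le_two_mul_sum_Ico_of_le_add (fun n => sub_nonneg.2 (Real.cos_le_one _)) hmM
    (fun n => ?_) a
  have hphase : (θ - t * n) - (θ - t * (n + m : ℕ)) = t * m := by push_cast; ring
  have habs : |t * m| = |t| * m := by rw [abs_mul, Nat.abs_cast]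
  calc (min 1 (|t| * M) / π) ^ 2 ≤ (|t| * m / π) ^ 2 := by
        gcongr
        exact (min_le_min_right _ hone).trans hm
    _ = (((θ - t * n) - (θ - t * (n + m : ℕ))) / π) ^ 2 := by
      rw [hphase, div_pow, div_pow, ← habs, sq_abs]
    _ ≤ _ := sq_sub_div_pi_le (by rwa [hphase, habs])

end CosineSums

section PhaseLoss

/-- The density `e^x / (1 + e^x)²` of the standard logistic distribution, which is also the variance
of a Bernoulli variable with log-odds `x`. -/
noncomputable def logisticDensity (x : ℝ) : ℝ :=
  Real.exp x / (1 + Real.exp x) ^ 2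

lemma logisticDensity_pos (x : ℝ) : 0 < logisticDensity x := by
  unfold logisticDensity
  positivity

lemma exp_neg_mul_logisticDensity_le {s : ℝ} (hs : 0 ≤ s) (x : ℝ) :
    Real.exp (-s) * logisticDensity x ≤ logisticDensity (x - s) := by
  have hexp : Real.exp (x - s) = Real.exp (-s) * Real.exp x := by rw [← Real.exp_add]; ring_nf
  have hle : Real.exp (x - s) ≤ Real.exp x := Real.exp_le_exp.2 (sub_le_self x hs)
  rw [logisticDensity, ← mul_div_assoc, ← hexp]
  unfold logisticDensity
  gcongr

/-- A lower bound for `log (1 + ‖w‖) - log ‖1 + w‖`, the logarithmic loss in the modulus of `1 + w`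
caused by the phase of `w`. -/
noncomputable def phaseLoss (w : ℂ) : ℝ :=
  (‖w‖ - w.re) / (1 + ‖w‖) ^ 2

lemma phaseLoss_nonneg (w : ℂ) : 0 ≤ phaseLoss w :=
  div_nonneg (sub_nonneg.2 (Complex.re_le_norm w)) (sq_nonneg _)

lemma phaseLoss_exp (w : ℂ) :
    phaseLoss (Complex.exp w) = logisticDensity w.re * (1 - Real.cos w.im) := by
  rw [phaseLoss, logisticDensity, Complex.norm_exp, Complex.exp_re]
  ring

lemma sq_norm_one_add (w : ℂ) : ‖1 + w‖ ^ 2 = (1 + ‖w‖) ^ 2 * (1 - 2 * phaseLoss w) := by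
  have hloss : (1 + ‖w‖) ^ 2 * phaseLoss w = ‖w‖ - w.re := mul_div_cancel₀ _ (by positivity)
  have hsq : ‖1 + w‖ ^ 2 = 1 + 2 * w.re + ‖w‖ ^ 2 := by
    rw [← Complex.normSq_eq_norm_sq, ← Complex.normSq_eq_norm_sq, Complex.normSq_add]
    simp only [map_one, one_mul, Complex.conj_re]
    ring
  linear_combination hsq + 2 * hloss

lemma norm_one_add_le_mul_exp_neg_phaseLoss (w : ℂ) :
    ‖1 + w‖ ≤ (1 + ‖w‖) * Real.exp (-phaseLoss w) := by
  refine le_of_sq_le_sq ?_ (by positivity)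
  calc ‖1 + w‖ ^ 2 = (1 + ‖w‖) ^ 2 * (-(2 * phaseLoss w) + 1) := by rw [sq_norm_one_add]; ring
    _ ≤ (1 + ‖w‖) ^ 2 * Real.exp (-(2 * phaseLoss w)) := by
      gcongr
      exact Real.add_one_le_exp _
    _ = ((1 + ‖w‖) * Real.exp (-phaseLoss w)) ^ 2 := by
      rw [mul_pow, ← Real.exp_nat_mul]
      push_cast
      ring_nf

end PhaseLoss

section Multiplicity

lemma g_eq_ceil_sub_ceil {α : ℝ} (hα : 0 < α) {k : ℕ} (hk : 0 < k) :
    g α k = ⌈((k : ℝ) + 1) ^ α⁻¹⌉₊ - ⌈(k : ℝ) ^ α⁻¹⌉₊ := by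
  have hk0 : (0 : ℝ) < k := Nat.cast_pos.2 hk
  have hset : {n : ℕ | 1 ≤ n ∧ ⌊(n : ℝ) ^ α⌋ = (k : ℤ)} =
      Finset.Ico ⌈(k : ℝ) ^ α⁻¹⌉₊ ⌈((k : ℝ) + 1) ^ α⁻¹⌉₊ := by
    ext n
    have hlow : (k : ℝ) ^ α⁻¹ ≤ n ↔ (k : ℝ) ≤ (n : ℝ) ^ α :=
      Real.rpow_inv_le_iff_of_pos hk0.le n.cast_nonneg hα
    have hupp : (n : ℝ) < ((k : ℝ) + 1) ^ α⁻¹ ↔ (n : ℝ) ^ α < (k : ℝ) + 1 :=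
      Real.lt_rpow_inv_iff_of_pos n.cast_nonneg (by positivity) hα
    simp only [Set.mem_ofPred_eq, Finset.coe_Ico, Set.mem_Ico, Nat.ceil_le, Nat.lt_ceil,
      Int.floor_eq_iff, Int.cast_natCast, hlow, hupp, and_iff_right_iff_imp]
    rintro ⟨hkn, -⟩
    exact Nat.cast_pos.1 ((Real.rpow_pos_of_pos hk0 _).trans_le (hlow.2 hkn))
  rw [g, hset, Set.ncard_coe_finset, Nat.card_Ico]

lemma mul_rpow_sub_one_le_rpow_sub_rpow {x p : ℝ} (hx : 0 < x) (hp : 1 ≤ p) :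
    p * x ^ (p - 1) ≤ (x + 1) ^ p - x ^ p := by
  have hinv : 0 < x⁻¹ := inv_pos.2 hx
  have hbernoulli : 1 + p * x⁻¹ ≤ (1 + x⁻¹) ^ p :=
    one_add_mul_self_le_rpow_one_add (by linarith) hp
  have hscale : (x + 1) ^ p = x ^ p * (1 + x⁻¹) ^ p := by
    rw [← Real.mul_rpow hx.le (by positivity), mul_add, mul_one, mul_inv_cancel₀ hx.ne']
  have hmul := mul_le_mul_of_nonneg_left hbernoulli (Real.rpow_nonneg hx.le p)
  rw [hscale, Real.rpow_sub_one hx.ne', div_eq_mul_inv]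
  linarith

lemma rpow_div_two_le_g {α : ℝ} (hα : 0 < α) (hα1 : α ≤ 1) {k : ℕ} (hk : 0 < k) :
    (k : ℝ) ^ (α⁻¹ - 1) / 2 ≤ g α k := by
  have hβ : 1 ≤ α⁻¹ := (one_le_inv₀ hα).2 hα1
  have hk0 : (0 : ℝ) < k := Nat.cast_pos.2 hk
  have hone : 1 ≤ (k : ℝ) ^ (α⁻¹ - 1) := Real.one_le_rpow (Nat.one_le_cast.2 hk) (by linarith)
  have hdiff : (k : ℝ) ^ (α⁻¹ - 1) ≤ ((k : ℝ) + 1) ^ α⁻¹ - (k : ℝ) ^ α⁻¹ :=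
    (le_mul_of_one_le_left (by positivity) hβ).trans (mul_rpow_sub_one_le_rpow_sub_rpow hk0 hβ)
  have hg : (g α k : ℝ) = ⌈((k : ℝ) + 1) ^ α⁻¹⌉₊ - ⌈(k : ℝ) ^ α⁻¹⌉₊ := by
    rw [g_eq_ceil_sub_ceil hα hk, Nat.cast_sub (Nat.ceil_mono (by linarith))]
  have hlt : (k : ℝ) ^ (α⁻¹ - 1) < g α k + 1 := by
    linarith [Nat.le_ceil (((k : ℝ) + 1) ^ α⁻¹),
      Nat.ceil_lt_add_one (show 0 ≤ (k : ℝ) ^ α⁻¹ by positivity)]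
  have hg1 : (1 : ℝ) ≤ g α k := by
    have hgpos : (0 : ℝ) < g α k := by linarith
    exact_mod_cast hgpos
  linarith

lemma g_le_pow {α : ℝ} (hα : 0 < α) {k : ℕ} (hk : 0 < k) : g α k ≤ (k + 1) ^ ⌈α⁻¹⌉₊ := by
  rw [g_eq_ceil_sub_ceil hα hk]
  refine (Nat.sub_le _ _).trans (Nat.ceil_le.2 ?_)
  calc ((k : ℝ) + 1) ^ α⁻¹ ≤ ((k : ℝ) + 1) ^ (⌈α⁻¹⌉₊ : ℝ) :=
        Real.rpow_le_rpow_of_exponent_le (by simp) (Nat.le_ceil _)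
    _ = ((k + 1) ^ ⌈α⁻¹⌉₊ : ℕ) := by rw [Real.rpow_natCast]; push_cast; rfl

lemma summable_g_mul_pow {α : ℝ} (hα : 0 < α) {q : ℝ} (hq0 : 0 ≤ q) (hq1 : q < 1) :
    Summable fun k : ℕ => (g α (k + 1) : ℝ) * q ^ (k + 1) := by
  have hpoly : Summable fun n : ℕ => (n : ℝ) ^ ⌈α⁻¹⌉₊ * q ^ n :=
    summable_pow_mul_geometric_of_norm_lt_one _ (by rwa [Real.norm_of_nonneg hq0])
  refine Summable.of_nonneg_of_le (fun k => by positivity) (fun k => ?_)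
    (((summable_nat_add_iff 1).2 hpoly).mul_left (2 ^ ⌈α⁻¹⌉₊))
  have hg : g α (k + 1) ≤ (2 * (k + 1)) ^ ⌈α⁻¹⌉₊ :=
    (g_le_pow hα k.succ_pos).trans (Nat.pow_le_pow_left (by omega) _)
  calc (g α (k + 1) : ℝ) * q ^ (k + 1) ≤ ((2 * (k + 1)) ^ ⌈α⁻¹⌉₊ : ℕ) * q ^ (k + 1) := by gcongr
    _ = 2 ^ ⌈α⁻¹⌉₊ * (((k + 1 : ℕ) : ℝ) ^ ⌈α⁻¹⌉₊ * q ^ (k + 1)) := by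
      push_cast
      rw [mul_pow, mul_assoc]

end Multiplicity

section Products

lemma multipliable_one_add_pow {ι R : Type*} [NormedCommRing R] [NormOneClass R] [CompleteSpace R]
    {a : ι → R} {m : ι → ℕ} (h : Summable fun i => (m i : ℝ) * ‖a i‖) :
    Multipliable fun i => (1 + a i) ^ m i := by
  -- The product with multiplicities is the product of `1 + a i` over all pairs `(i, j)`, `j < m i`.
  have hpairs : Summable fun p : Σ i, Fin (m i) => ‖a p.1‖ :=
    (summable_sigma_of_nonneg fun _ => norm_nonneg _).2
      ⟨fun _ => (hasSum_fintype _).summable, by simpa using h⟩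
  refine ((multipliable_one_add_of_summable hpairs).hasProd.sigma fun i => ?_).multipliable
  simpa using hasProd_fintype fun _ : Fin (m i) => 1 + a i

lemma norm_tprod_le_exp_neg_sum_mul_norm_tprod {ι 𝕜 : Type*} [NormedField 𝕜] {f F : ι → 𝕜}
    (hf : Multipliable f) (hF : Multipliable F) {e : ι → ℝ} (he : ∀ i, 0 ≤ e i)
    (hle : ∀ i, ‖f i‖ ≤ Real.exp (-e i) * ‖F i‖) (s : Finset ι) :
    ‖∏' i, f i‖ ≤ Real.exp (-∑ i ∈ s, e i) * ‖∏' i, F i‖ := by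
  rw [hf.norm_tprod, hF.norm_tprod]
  refine le_of_tendsto_of_tendsto hf.norm.hasProd (hF.norm.hasProd.const_mul _) ?_
  filter_upwards [Filter.eventually_ge_atTop s] with T hsT
  calc ∏ i ∈ T, ‖f i‖ ≤ ∏ i ∈ T, Real.exp (-e i) * ‖F i‖ :=
        Finset.prod_le_prod (fun i _ => norm_nonneg _) fun i _ => hle i
    _ = Real.exp (-∑ i ∈ T, e i) * ∏ i ∈ T, ‖F i‖ := by
      rw [Finset.prod_mul_distrib, ← Real.exp_sum, Finset.sum_neg_distrib]
    _ ≤ Real.exp (-∑ i ∈ s, e i) * ∏ i ∈ T, ‖F i‖ := by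
      gcongr
      exact fun i _ _ => he i

lemma multipliable_Q {α : ℝ} (hα : 0 < α) {z : ℂ} (hz : ‖z‖ < 1) (u : ℂ) :
    Multipliable fun k : ℕ => (1 + u * z ^ (k + 1)) ^ g α (k + 1) := by
  refine multipliable_one_add_pow
    (((summable_g_mul_pow hα (norm_nonneg z) hz).mul_left ‖u‖).congr fun k => ?_)
  rw [norm_mul, norm_pow]
  ring

lemma norm_Q_le_exp_neg_sum_phaseLoss_mul {α : ℝ} (hα : 0 < α) {z : ℂ} (hz : ‖z‖ < 1) (u : ℂ)
    (s : Finset ℕ) :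
    ‖Q α z u‖ ≤ Real.exp (-∑ k ∈ s, g α (k + 1) * phaseLoss (u * z ^ (k + 1))) *
      ‖Q α (‖z‖ : ℂ) (‖u‖ : ℂ)‖ := by
  refine norm_tprod_le_exp_neg_sum_mul_norm_tprod (multipliable_Q hα hz u)
    (multipliable_Q hα (by simpa using hz) _)
    (fun k => mul_nonneg (Nat.cast_nonneg _) (phaseLoss_nonneg _)) (fun k => ?_) s
  have hnorm : ‖(1 : ℂ) + ‖u‖ * (‖z‖ : ℂ) ^ (k + 1)‖ = 1 + ‖u * z ^ (k + 1)‖ := by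
    rw [norm_mul, norm_pow]
    exact_mod_cast Real.norm_of_nonneg (by positivity)
  rw [norm_pow, norm_pow, hnorm, ← mul_neg, Real.exp_nat_mul, ← mul_pow, mul_comm (Real.exp _)]
  gcongr
  exact norm_one_add_le_mul_exp_neg_phaseLoss _

end Products

section Exponent

lemma exp_mul_exp_pow (r t ρ θ : ℝ) (n : ℕ) :
    Complex.exp (ρ + θ * Complex.I) * Complex.exp (-r - t * Complex.I) ^ n =
      Complex.exp ((ρ - r * n : ℝ) + (θ - t * n : ℝ) * Complex.I) := by
  rw [← Complex.exp_nat_mul, ← Complex.exp_add]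
  push_cast
  ring_nf

lemma exp_neg_mul_logisticDensity_mul_le_phaseLoss {r s : ℝ} (hr : 0 ≤ r) {n : ℕ}
    (hrn : r * n ≤ s) (ρ t θ : ℝ) :
    Real.exp (-s) * logisticDensity ρ * (1 - Real.cos (θ - t * n)) ≤
      phaseLoss (Complex.exp (ρ + θ * Complex.I) * Complex.exp (-r - t * Complex.I) ^ n) := by
  have hcos : 0 ≤ 1 - Real.cos (θ - t * n) := sub_nonneg.2 (Real.cos_le_one _)
  calc Real.exp (-s) * logisticDensity ρ * (1 - Real.cos (θ - t * n))
      ≤ Real.exp (-(r * n)) * logisticDensity ρ * (1 - Real.cos (θ - t * n)) := by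
        have := (logisticDensity_pos ρ).le
        gcongr
    _ ≤ logisticDensity (ρ - r * n) * (1 - Real.cos (θ - t * n)) := by
      gcongr
      exact exp_neg_mul_logisticDensity_le (by positivity) ρ
    _ = _ := by simp [exp_mul_exp_pow, phaseLoss_exp]

lemma mul_one_sub_cos_le_g_mul_phaseLoss {α : ℝ} (hα : 0 < α) (hα1 : α ≤ 1) {r s : ℝ}
    (hr : 0 ≤ r) {M n : ℕ} (hn : 0 < n) (hMn : M ≤ n) (hrn : r * n ≤ s) (ρ t θ : ℝ) :
    (M : ℝ) ^ (α⁻¹ - 1) / 2 * (Real.exp (-s) * logisticDensity ρ) * (1 - Real.cos (θ - t * n)) ≤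
      g α n * phaseLoss
        (Complex.exp (ρ + θ * Complex.I) * Complex.exp (-r - t * Complex.I) ^ n) := by
  have hβ : 0 ≤ α⁻¹ - 1 := sub_nonneg.2 ((one_le_inv₀ hα).2 hα1)
  have hg : (M : ℝ) ^ (α⁻¹ - 1) / 2 ≤ g α n :=
    le_trans (by gcongr) (rpow_div_two_le_g hα hα1 hn)
  have hL := (logisticDensity_pos ρ).le
  have hcos : 0 ≤ 1 - Real.cos (θ - t * n) := sub_nonneg.2 (Real.cos_le_one _)
  rw [mul_assoc]
  exact mul_le_mul hg (exp_neg_mul_logisticDensity_mul_le_phaseLoss hr hrn ρ t θ)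
    (by positivity) (Nat.cast_nonneg _)

lemma mul_le_sum_g_mul_phaseLoss {α : ℝ} (hα : 0 < α) (hα1 : α ≤ 1) {r s t : ℝ} (hr : 0 ≤ r)
    (ht : |t| ≤ π) {M : ℕ} (hM : 0 < M) (hrM : r * (3 * M) ≤ s) (ρ θ : ℝ) :
    Real.exp (-s) * logisticDensity ρ / (4 * π ^ 2) * ((M : ℝ) ^ α⁻¹ * min 1 (|t| * M) ^ 2) ≤
      ∑ k ∈ Finset.Ico M (3 * M), g α (k + 1) * phaseLoss
        (Complex.exp (ρ + θ * Complex.I) * Complex.exp (-r - t * Complex.I) ^ (k + 1)) := by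
  have hM0 : (M : ℝ) ≠ 0 := Nat.cast_ne_zero.2 hM.ne'
  have hL := (logisticDensity_pos ρ).le
  have hpow : (M : ℝ) ^ α⁻¹ = (M : ℝ) ^ (α⁻¹ - 1) * M := by
    rw [Real.rpow_sub_one hM0, div_mul_cancel₀ _ hM0]
  have hcosSum := mul_sq_min_div_pi_le_sum_one_sub_cos ht θ (M + 1) M
  rw [show M + 1 + 2 * M = 3 * M + 1 by ring] at hcosSum
  rw [Finset.sum_Ico_add' (fun n : ℕ => (g α n : ℝ) * phaseLoss
    (Complex.exp (ρ + θ * Complex.I) * Complex.exp (-r - t * Complex.I) ^ n))]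
  calc Real.exp (-s) * logisticDensity ρ / (4 * π ^ 2) * ((M : ℝ) ^ α⁻¹ * min 1 (|t| * M) ^ 2)
      = (M : ℝ) ^ (α⁻¹ - 1) / 2 * (Real.exp (-s) * logisticDensity ρ) *
        (M * (min 1 (|t| * M) / π) ^ 2 / 2) := by
        rw [hpow]
        ring
    _ ≤ (M : ℝ) ^ (α⁻¹ - 1) / 2 * (Real.exp (-s) * logisticDensity ρ) *
        ∑ n ∈ Finset.Ico (M + 1) (3 * M + 1), (1 - Real.cos (θ - t * n)) := by
      gcongr
      linarith
    _ ≤ _ := by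
      rw [Finset.mul_sum]
      refine Finset.sum_le_sum fun n hn => ?_
      rw [Finset.mem_Ico] at hn
      have hnM : (n : ℝ) ≤ 3 * M := by exact_mod_cast Nat.lt_succ_iff.1 hn.2
      exact mul_one_sub_cos_le_g_mul_phaseLoss hα hα1 hr (by omega) (by omega)
        ((mul_le_mul_of_nonneg_left hnM hr).trans hrM) ρ t θ

lemma rpow_neg_mul_sq_min_le {r y : ℝ} (hr : 0 < r) (hy : r⁻¹ / 2 ≤ y) {β τ : ℝ} (hβ : 0 ≤ β)
    (hτ : 0 ≤ τ) :
    (1 / 2) ^ β / 4 * (r ^ (-β) * min 1 (τ / r) ^ 2) ≤ y ^ β * min 1 (τ * y) ^ 2 := by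
  have hy0 : 0 ≤ y := le_trans (by positivity) hy
  have hpow : (1 / 2 : ℝ) ^ β * r ^ (-β) = (r⁻¹ / 2) ^ β := by
    rw [Real.rpow_neg hr.le, ← Real.inv_rpow hr.le, ← Real.mul_rpow (by norm_num) (by positivity)]
    ring_nf
  have hmin : min 1 (τ / r) / 2 ≤ min 1 (τ * y) := by
    refine le_min (by linarith [min_le_left 1 (τ / r)]) ?_
    calc min 1 (τ / r) / 2 ≤ τ / r / 2 := by gcongr; exact min_le_right _ _
      _ = τ * (r⁻¹ / 2) := by ring
      _ ≤ τ * y := by gcongr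
  calc (1 / 2) ^ β / 4 * (r ^ (-β) * min 1 (τ / r) ^ 2)
      = (r⁻¹ / 2) ^ β * (min 1 (τ / r) / 2) ^ 2 := by
        rw [← hpow]
        ring
    _ ≤ y ^ β * min 1 (τ * y) ^ 2 := by gcongr

lemma exists_finset_mul_le_sum_g_mul_phaseLoss {α : ℝ} (hα : 0 < α) (hα1 : α ≤ 1) {r t : ℝ}
    (hr : 0 < r) (hr1 : r ≤ 1) (ht : |t| ≤ π) (ρ θ : ℝ) :
    ∃ s : Finset ℕ, Real.exp (-3) * (1 / 2) ^ α⁻¹ / (16 * π ^ 2) * logisticDensity ρ *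
        (r ^ (-α⁻¹) * min 1 (|t| / r) ^ 2) ≤
      ∑ k ∈ s, g α (k + 1) * phaseLoss
        (Complex.exp (ρ + θ * Complex.I) * Complex.exp (-r - t * Complex.I) ^ (k + 1)) := by
  have hone : 1 ≤ r⁻¹ := (one_le_inv₀ hr).2 hr1
  set M := ⌊r⁻¹⌋₊
  have hrM : r⁻¹ / 2 ≤ M := (Nat.div_two_lt_floor hone).le
  have hMr : r * (3 * M) ≤ 3 := by
    have hle : r * M ≤ 1 := (le_inv_mul_iff₀ hr).1 (by simpa using Nat.floor_le (inv_pos.2 hr).le)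
    linarith
  have hL := (logisticDensity_pos ρ).le
  refine ⟨Finset.Ico M (3 * M), ?_⟩
  calc _ = Real.exp (-3) * logisticDensity ρ / (4 * π ^ 2) *
        ((1 / 2) ^ α⁻¹ / 4 * (r ^ (-α⁻¹) * min 1 (|t| / r) ^ 2)) := by ring
    _ ≤ Real.exp (-3) * logisticDensity ρ / (4 * π ^ 2) *
        ((M : ℝ) ^ α⁻¹ * min 1 (|t| * M) ^ 2) := by
      gcongr _ * ?_
      exact rpow_neg_mul_sq_min_le hr hrM (inv_pos.2 hα).le (abs_nonneg t)
    _ ≤ _ := mul_le_sum_g_mul_phaseLoss hα hα1 hr.le ht (Nat.floor_pos.2 hone) hMr ρ θ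

lemma rpow_le_rpow_neg_mul_sq_min {r τ δ : ℝ} (hr : 0 < r) (hr1 : r ≤ 1) (hδ : 0 ≤ δ)
    (hτ : r ^ (1 + δ) ≤ τ) (β : ℝ) :
    r ^ (2 * δ - β) ≤ r ^ (-β) * min 1 (τ / r) ^ 2 := by
  have hmin : r ^ δ ≤ min 1 (τ / r) := by
    refine le_min (Real.rpow_le_one hr.le hr1 hδ) ((le_div_iff₀' hr).2 ?_)
    rwa [Real.rpow_add hr, Real.rpow_one] at hτ
  calc r ^ (2 * δ - β) = r ^ (-β) * (r ^ δ) ^ 2 := by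
        rw [← Real.rpow_mul_natCast hr.le, ← Real.rpow_add hr]
        push_cast
        ring_nf
    _ ≤ r ^ (-β) * min 1 (τ / r) ^ 2 := by gcongr

end Exponent

theorem Q_ratio_bound_large_t_general {α : ℝ} (hα : 0 < α) (hα1 : α ≤ 1) :
    ∃ c > (0 : ℝ), ∀ r : ℝ, 0 < r → r ≤ 1 → ∀ ρ t θ : ℝ, |t| ≤ π →
      ‖Q α (Complex.exp (-r - t * Complex.I)) (Complex.exp (ρ + θ * Complex.I))‖
        / ‖Q α (Complex.exp (-r)) (Complex.exp ρ)‖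
      ≤ Real.exp (-c * logisticDensity ρ * (r ^ (-α⁻¹) * min 1 (|t| / r) ^ 2)) := by
  refine ⟨Real.exp (-3) * (1 / 2) ^ α⁻¹ / (16 * π ^ 2), by positivity,
    fun r hr hr1 ρ t θ ht => div_le_of_le_mul₀ (norm_nonneg _) (Real.exp_pos _).le ?_⟩
  obtain ⟨s, hs⟩ := exists_finset_mul_le_sum_g_mul_phaseLoss hα hα1 hr hr1 ht ρ θ
  set z := Complex.exp (-r - t * Complex.I) with hz
  set u := Complex.exp (ρ + θ * Complex.I) with hu
  have hznorm : ‖z‖ = Real.exp (-r) := by simp [hz, Complex.norm_exp]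
  have hunorm : ‖u‖ = Real.exp ρ := by simp [hu, Complex.norm_exp]
  have hz1 : ‖z‖ < 1 := hznorm ▸ Real.exp_lt_one_iff.2 (neg_lt_zero.2 hr)
  have hQ := norm_Q_le_exp_neg_sum_phaseLoss_mul hα hz1 u s
  rw [hznorm, hunorm, Complex.ofReal_exp, Complex.ofReal_exp, Complex.ofReal_neg] at hQ
  refine hQ.trans (mul_le_mul_of_nonneg_right (Real.exp_le_exp.2 ?_) (norm_nonneg _))
  rwa [neg_mul, neg_mul, neg_le_neg_iff]

/-- Lemma (estimate for large `|t|`): for `r` small, `r^{1+3β/7} < |t| ≤ π`, `|θ| ≤ π`,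
`|Q(e^{−(r+it)}, e^{ρ+iθ})|/Q(e^{−r}, e^ρ) ≤ exp(−c·(e^ρ/(1+e^ρ)²)·r^{−β/7})`. -/
theorem Q_ratio_bound_large_t (α β : ℝ) (hα : 0 < α ∧ α < 1) (hβ : β = 1 / α) :
    ∃ c > (0:ℝ), ∃ r₀ > (0:ℝ), ∀ r : ℝ, 0 < r → r < r₀ → ∀ ρ t θ : ℝ,
      r ^ (1 + 3 * β / 7) < |t| → |t| ≤ π → |θ| ≤ π →
      ‖Q α (Complex.exp (-(r : ℂ) - (t : ℂ) * Complex.I))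
          (Complex.exp ((ρ : ℂ) + (θ : ℂ) * Complex.I))‖
        / ‖Q α (Complex.exp (-(r : ℂ))) (Complex.exp (ρ : ℂ))‖
      ≤ Real.exp (-c * (Real.exp ρ / (1 + Real.exp ρ) ^ 2) * r ^ (-β / 7)) := by
  obtain ⟨c, hc, hbound⟩ := Q_ratio_bound_large_t_general hα.1 hα.2.le
  refine ⟨c, hc, 1, one_pos, fun r hr hr1 ρ t θ ht htπ _ =>
    (hbound r hr hr1.le ρ t θ htπ).trans (Real.exp_le_exp.2 ?_)⟩
  have hβ0 : 0 ≤ β := hβ ▸ (one_div_pos.2 hα.1).le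
  have hpow := rpow_le_rpow_neg_mul_sq_min hr hr1.le (by positivity : 0 ≤ 3 * β / 7) ht.le β
  rw [show 2 * (3 * β / 7) - β = -β / 7 by ring, hβ, one_div] at hpow
  rw [hβ, one_div]
  exact mul_le_mul_of_nonpos_left hpow
    (mul_nonpos_of_nonpos_of_nonneg (neg_nonpos.2 hc.le) (logisticDensity_pos ρ).le)
end
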